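/- arXiv:2407.08419 — 6 statements merged into one kernel-verified Lean document; each statement's English description precedes it below -/
import Mathlib

section
/- Let n ≥ 1, let S = ℂ[x_1,…,x_n], let L be the fraction field of S, let G be a finite subgroup of GL_n(ℂ), and let φ_1,…,φ_n ∈ S be algebraically independent over ℂ with each φ_i G-invariant. Let D_1,…,D_n : L → L be ℂ-linear derivations satisfying D_j(φ_i) = δ_{ij} for all i, j, and for each ℓ set A_ℓ := (D_ℓ J_φ)·J_φ^{-1}, where D_ℓ is applied entrywise to J_φ viewed over L. Then every entry of every A_ℓ is fixed by γ_M for every M ∈ G; that is, the entries of A_1,…,A_n lie in the fixed field L^G. -/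
open MvPolynomial

noncomputable abbrev polyS (n : ℕ) := MvPolynomial (Fin n) ℂ
noncomputable abbrev fracL (n : ℕ) := FractionRing (polyS n)
noncomputable abbrev toL (n : ℕ) : polyS n →+* fracL n := algebraMap (polyS n) (fracL n)

/-- The action of `M ∈ GL_n(ℂ)` on polynomials: `γ_M(f)(x) = f(x · M⁻ᵀ)`,
i.e. the variable `x_i` is substituted by `∑_k (M⁻¹)_{i k} · x_k`. -/
noncomputable def gammaAct (n : ℕ) (M : GL (Fin n) ℂ) : polyS n →ₐ[ℂ] polyS n :=
  MvPolynomial.aeval (fun i => ∑ k, MvPolynomial.C (((M⁻¹ : GL (Fin n) ℂ) :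
    Matrix (Fin n) (Fin n) ℂ) i k) * MvPolynomial.X k)

/-- The Jacobian matrix of an `n`-tuple of polynomials: `(i,j)` entry `∂φ_i/∂x_j`. -/
noncomputable def jacMat {n : ℕ} (φ : Fin n → polyS n) : Matrix (Fin n) (Fin n) (polyS n) :=
  Matrix.of fun i j => MvPolynomial.pderiv j (φ i)

theorem aux_chain (n : ℕ) (D : Derivation ℂ (fracL n) (fracL n)) (f : polyS n) :
    D (toL n f) = ∑ j, toL n (pderiv j f) * D (toL n (X j)) := by
  induction f using MvPolynomial.induction_on with
  | C a =>
    have h : toL n (C a) = algebraMap ℂ (fracL n) a := by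
      rw [IsScalarTower.algebraMap_apply ℂ (polyS n) (fracL n)]; rfl
    rw [h, D.map_algebraMap]
    simp
  | add p q hp hq =>
    simp only [map_add, hp, hq, add_mul, Finset.sum_add_distrib]
  | mul_X p i hp =>
    rw [map_mul, D.leibniz, hp]
    simp only [Derivation.leibniz, pderiv_X, smul_eq_mul, map_add, map_mul, add_mul,
      Finset.sum_add_distrib, Finset.mul_sum]
    refine congrArg₂ (· + ·) ?_ ?_
    · rw [Finset.sum_eq_single i]
      · simp
      · intro b _ hb; simp [Pi.single_apply, hb.symm]
      · simp
    · refine Finset.sum_congr rfl fun j _ => by ring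

theorem aux_gamma (n : ℕ) (M : GL (Fin n) ℂ) (j : Fin n) (f : polyS n) :
    pderiv j (gammaAct n M f) = ∑ k, gammaAct n M (pderiv k f) *
      C (((M⁻¹ : GL (Fin n) ℂ) : Matrix (Fin n) (Fin n) ℂ) k j) := by
  induction f using MvPolynomial.induction_on with
  | C a => simp [gammaAct]
  | add p q hp hq =>
    simp only [map_add, hp, hq, add_mul, Finset.sum_add_distrib]
  | mul_X p i hp =>
    have hX : pderiv j (gammaAct n M (X i)) =
        C (((M⁻¹ : GL (Fin n) ℂ) : Matrix (Fin n) (Fin n) ℂ) i j) := by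
      simp only [gammaAct, aeval_X, map_sum, Derivation.leibniz, pderiv_X, pderiv_C, smul_eq_mul]
      rw [Finset.sum_eq_single j]
      · simp
      · intro b _ hb; simp [Pi.single_apply, hb]
      · simp
    rw [map_mul, Derivation.leibniz, hp, hX]
    simp only [Derivation.leibniz, pderiv_X, smul_eq_mul, map_add, map_mul, add_mul,
      Finset.sum_add_distrib, Finset.mul_sum]
    refine congrArg₂ (· + ·) ?_ ?_
    · rw [Finset.sum_eq_single i]
      · simp
      · intro b _ hb; simp [Pi.single_apply, hb.symm]
      · simp
    · refine Finset.sum_congr rfl fun j _ => by ring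

theorem aux_ext (n : ℕ) (D E : Derivation ℂ (fracL n) (fracL n))
    (h : ∀ j, D (toL n (X j)) = E (toL n (X j))) (x : fracL n) : D x = E x := by
  have hS : ∀ f, D (toL n f) = E (toL n f) := fun f => by
    rw [aux_chain, aux_chain n E]; simp only [h]
  obtain ⟨a, b, hb, rfl⟩ := IsFractionRing.div_surjective (A := polyS n) x
  have hS' : ∀ f, D (algebraMap (polyS n) (fracL n) f) = E (algebraMap (polyS n) (fracL n) f) := hS
  rw [Derivation.leibniz_div, Derivation.leibniz_div, hS', hS']

noncomputable def auxConj (n : ℕ) (s : fracL n ≃ₐ[ℂ] fracL n)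
    (D : Derivation ℂ (fracL n) (fracL n)) : Derivation ℂ (fracL n) (fracL n) :=
  Derivation.mk' (s.toLinearMap ∘ₗ (D : fracL n →ₗ[ℂ] fracL n) ∘ₗ s.symm.toLinearMap) (by
    intro a b
    simp)

theorem auxConj_apply (n : ℕ) (s : fracL n ≃ₐ[ℂ] fracL n)
    (D : Derivation ℂ (fracL n) (fracL n)) (x : fracL n) :
    auxConj n s D x = s (D (s.symm x)) := rfl

theorem stmt4 (n : ℕ) (hn : 1 ≤ n) (G : Subgroup (GL (Fin n) ℂ)) (hGfin : Finite G)
    (φ : Fin n → polyS n) (hφ : AlgebraicIndependent ℂ φ)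
    (hinv : ∀ i, ∀ M ∈ G, gammaAct n M (φ i) = φ i)
    -- the extension of the action on `S` to field automorphisms of `L`
    (σ : GL (Fin n) ℂ → (fracL n ≃ₐ[ℂ] fracL n))
    (hσ : ∀ M : GL (Fin n) ℂ, ∀ f : polyS n, σ M (toL n f) = toL n (gammaAct n M f))
    -- the commuting derivations dual to the fundamental invariants
    (D : Fin n → Derivation ℂ (fracL n) (fracL n))
    (hD : ∀ j i, D j (toL n (φ i)) = if i = j then 1 else 0)
    (A : Fin n → Matrix (Fin n) (Fin n) (fracL n))
    (hA : ∀ ℓ, A ℓ =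
      (Matrix.of fun i j => D ℓ (((jacMat φ).map (toL n)) i j)) * ((jacMat φ).map (toL n))⁻¹) :
    ∀ ℓ, ∀ M ∈ G, ∀ i j, σ M (A ℓ i j) = A ℓ i j := by
  intro ℓ M hM
  set J := (jacMat φ).map (toL n) with hJ
  have hJij : ∀ i j, J i j = toL n (pderiv j (φ i)) := fun i j => rfl
  let B : Matrix (Fin n) (Fin n) (fracL n) := Matrix.of fun j k => D k (toL n (X j))
  have hJB : J * B = 1 := by
    ext i k
    rw [Matrix.mul_apply, Matrix.one_apply, ← hD k i, aux_chain]
    rfl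
  have hBJ : B * J = 1 := mul_eq_one_comm.mp hJB
  have hdet : IsUnit J.det := (Matrix.isUnit_iff_isUnit_det J).mp (IsUnit.of_mul_eq_one _ hJB)
  have hAJ : A ℓ * J = Matrix.of fun i j => D ℓ (J i j) := by
    rw [hA ℓ, Matrix.mul_assoc, Matrix.nonsing_inv_mul _ hdet, Matrix.mul_one]
  have hfix : ∀ i, σ M (toL n (φ i)) = toL n (φ i) := fun i => by rw [hσ, hinv i M hM]
  -- the derivation commutes with the action
  have hcomm : ∀ x, σ M (D ℓ x) = D ℓ (σ M x) := by
    have hE : ∀ y, auxConj n (σ M) (D ℓ) y = D ℓ y := by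
      apply aux_ext
      have hv : J.mulVec (fun j => auxConj n (σ M) (D ℓ) (toL n (X j))) =
          J.mulVec (fun j => D ℓ (toL n (X j))) := by
        ext i
        have h1 := aux_chain n (auxConj n (σ M) (D ℓ)) (φ i)
        have h2 := aux_chain n (D ℓ) (φ i)
        have h3 : auxConj n (σ M) (D ℓ) (toL n (φ i)) = D ℓ (toL n (φ i)) := by
          have : (σ M).symm (toL n (φ i)) = toL n (φ i) := by
            rw [AlgEquiv.symm_apply_eq, hfix]
          rw [auxConj_apply, this, hD]
          split_ifs <;> simp
        exact h1.symm.trans (h3.trans h2)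
      have hv2 := congrArg B.mulVec hv
      rw [Matrix.mulVec_mulVec, Matrix.mulVec_mulVec, hBJ, Matrix.one_mulVec,
        Matrix.one_mulVec] at hv2
      exact fun j => congrFun hv2 j
    intro x
    have := hE (σ M x)
    rwa [auxConj_apply, AlgEquiv.symm_apply_apply] at this
  let N : Matrix (Fin n) (Fin n) (fracL n) :=
    ((M⁻¹ : GL (Fin n) ℂ) : Matrix (Fin n) (Fin n) ℂ).map (algebraMap ℂ (fracL n))
  have hN : ∀ i j, N i j =
      toL n (C (((M⁻¹ : GL (Fin n) ℂ) : Matrix (Fin n) (Fin n) ℂ) i j)) := by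
    intro i j
    change algebraMap ℂ (fracL n) _ = _
    rw [IsScalarTower.algebraMap_apply ℂ (polyS n) (fracL n)]; rfl
  have hJN : J.map (σ M) * N = J := by
    ext i j
    rw [Matrix.mul_apply, hJij i j]
    conv_rhs => rw [← hinv i M hM, aux_gamma, map_sum]
    refine Finset.sum_congr rfl fun k _ => ?_
    rw [Matrix.map_apply, hJij, hσ, hN, map_mul]
  have hDJ : (Matrix.of fun i j => D ℓ (J.map (σ M) i j)) * N =
      Matrix.of fun i j => D ℓ (J i j) := by
    ext i j
    rw [Matrix.of_apply, ← congrFun (congrFun hJN i) j, Matrix.mul_apply, Matrix.mul_apply, map_sum]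
    refine Finset.sum_congr rfl fun k _ => ?_
    have : D ℓ (N k j) = 0 := (D ℓ).map_algebraMap _
    rw [Derivation.leibniz, this]
    simp [mul_comm]
  have hσA : (A ℓ).map (σ M) * J.map (σ M) = Matrix.of fun i j => D ℓ (J.map (σ M) i j) := by
    rw [← Matrix.map_mul, hAJ]
    ext i j
    simp [hcomm]
  have key : (A ℓ).map (σ M) * J = A ℓ * J := by
    rw [hAJ, ← hDJ, ← hσA, Matrix.mul_assoc, hJN]
  have key2 : (A ℓ).map (σ M) = A ℓ := by
    have := congrArg (· * B) key
    simpa only [Matrix.mul_assoc, hJB, Matrix.mul_one] using this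
  intro i j
  exact congrFun (congrFun key2 i) j
end

section
/- Let n ≥ 1, let S = ℂ[x_1,…,x_n], let L be the fraction field of S, let G be a finite subgroup of GL_n(ℂ), and let φ_1,…,φ_n ∈ S each be G-invariant with det(J_φ) ≠ 0. Then L is generated as a field extension of the fixed field L^G by the n² entries of J_φ; that is, the intermediate field of L/L^G generated by the entries of J_φ equals all of L. -/
open MvPolynomial

theorem aux_gal {L : Type*} [Field L] {G : Type*} [Group G] [Finite G] [MulSemiringAction G L]
    (T : Set L) (h : ∀ g : G, (∀ t ∈ T, g • t = t) → ∀ x : L, g • x = x) :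
    Subfield.closure ({a : L | ∀ g : G, g • a = a} ∪ T) = ⊤ := by
  have hK : IntermediateField.adjoin (FixedPoints.subfield G L) T = ⊤ := by
    have : IsGalois (FixedPoints.subfield G L) L := IsGalois.of_fixed_field L G
    rw [← IsGalois.fixedField_fixingSubgroup
      (IntermediateField.adjoin (FixedPoints.subfield G L) T)]
    have : (IntermediateField.adjoin (FixedPoints.subfield G L) T).fixingSubgroup = ⊥ := by
      rw [eq_bot_iff]
      intro τ hτ
      rw [IntermediateField.mem_fixingSubgroup_iff] at hτ
      obtain ⟨g, rfl⟩ := FixedPoints.toAlgAut_surjective G L τ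
      rw [Subgroup.mem_bot]
      ext x
      exact h g (fun t ht => hτ t (IntermediateField.subset_adjoin _ _ ht)) x
    rw [this, IntermediateField.fixedField_bot]
  have h2 := congrArg IntermediateField.toSubfield hK
  rw [IntermediateField.adjoin_toSubfield, IntermediateField.top_toSubfield] at h2
  rw [← h2]
  congr 2
  ext a
  simp only [Set.mem_ofPred_eq, Set.mem_range]
  constructor
  · intro ha
    exact ⟨⟨a, ha⟩, rfl⟩
  · rintro ⟨b, rfl⟩
    exact b.2

theorem aux_chain_s7 (n : ℕ) (M : GL (Fin n) ℂ) (j : Fin n) (p : polyS n) :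
    pderiv j (gammaAct n M p) = ∑ k, gammaAct n M (pderiv k p) *
      C (((M⁻¹ : GL (Fin n) ℂ) : Matrix (Fin n) (Fin n) ℂ) k j) := by
  induction p using MvPolynomial.induction_on with
  | C a => simp [gammaAct]
  | add p q hp hq => simp only [map_add, hp, hq, add_mul, Finset.sum_add_distrib]
  | mul_X p i hp =>
    have hX : pderiv j (gammaAct n M (X i)) =
        C (((M⁻¹ : GL (Fin n) ℂ) : Matrix (Fin n) (Fin n) ℂ) i j) := by
      simp only [gammaAct, aeval_X, map_sum, pderiv_C_mul, pderiv_X, Pi.single_apply]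
      simp
    have : ∀ k, gammaAct n M (pderiv k (p * X i)) = gammaAct n M (pderiv k p) * gammaAct n M (X i)
        + (if i = k then gammaAct n M p else 0) := by
      intro k
      simp only [pderiv_mul, map_add, map_mul, pderiv_X, Pi.single_apply]
      split_ifs <;> simp_all
    simp only [this]
    simp only [map_mul, pderiv_mul, hp, hX, add_mul, Finset.sum_add_distrib, ite_mul,
      zero_mul, Finset.sum_ite_eq, Finset.mem_univ, if_true, Finset.sum_mul]
    refine congrArg₂ (· + ·) ?_ rfl
    exact Finset.sum_congr rfl fun k _ => mul_right_comm _ _ _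

theorem aux_one (n : ℕ) : gammaAct n 1 = AlgHom.id ℂ _ := by
  ext1 i
  simp [gammaAct, Matrix.one_apply]

theorem aux_mul (n : ℕ) (M N : GL (Fin n) ℂ) :
    gammaAct n (M * N) = (gammaAct n M).comp (gammaAct n N) := by
  apply MvPolynomial.algHom_ext
  intro i
  simp only [gammaAct, AlgHom.comp_apply, aeval_X, map_sum, map_mul, mul_inv_rev, Units.val_mul,
    Matrix.mul_apply, Finset.sum_mul, Finset.mul_sum, algHom_C, MvPolynomial.algebraMap_eq]
  rw [Finset.sum_comm]
  simp only [mul_assoc]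

theorem aux_ext_s7 {n : ℕ} (a b : fracL n ≃ₐ[ℂ] fracL n)
    (h : ∀ f, a (toL n f) = b (toL n f)) : a = b := by
  ext z
  obtain ⟨x, y, _, rfl⟩ := IsFractionRing.div_surjective (polyS n) z
  rw [map_div₀, map_div₀]
  exact congrArg₂ _ (h x) (h y)

theorem aux_triv (n : ℕ) (φ : Fin n → polyS n) (M : GL (Fin n) ℂ)
    (hinv : ∀ i, gammaAct n M (φ i) = φ i) (hdet : (jacMat φ).det ≠ 0)
    (hfix : ∀ i j, gammaAct n M (jacMat φ i j) = jacMat φ i j) : M = 1 := by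
  set N : Matrix (Fin n) (Fin n) (polyS n) :=
    (((M⁻¹ : GL (Fin n) ℂ) : Matrix (Fin n) (Fin n) ℂ)).map C with hN
  have h1 : jacMat φ * N = jacMat φ * 1 := by
    rw [mul_one]
    ext1 i j
    have := aux_chain_s7 n M j (φ i)
    rw [hinv] at this
    rw [Matrix.mul_apply]
    conv_rhs => rw [jacMat, Matrix.of_apply, this]
    refine Finset.sum_congr rfl fun k _ => ?_
    have := hfix i k
    simp only [jacMat, Matrix.of_apply] at this
    simp [jacMat, hN, this]
  have h2 : N = 1 := by
    have h3 : (jacMat φ).adjugate * (jacMat φ * N) = (jacMat φ).adjugate * (jacMat φ * 1) := by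
      rw [h1]
    rw [← mul_assoc, ← mul_assoc, Matrix.adjugate_mul, Matrix.smul_mul, Matrix.smul_mul,
      one_mul, one_mul] at h3
    exact smul_right_injective _ hdet h3
  rw [← inv_eq_one]
  ext i j
  have := congrFun (congrFun h2 i) j
  rw [hN, Matrix.map_apply] at this
  apply MvPolynomial.C_injective (Fin n) ℂ
  rw [this, Units.val_one, Matrix.one_apply, Matrix.one_apply]
  split_ifs <;> simp

theorem stmt7 (n : ℕ) (hn : 1 ≤ n) (G : Subgroup (GL (Fin n) ℂ)) (hGfin : Finite G)
    (φ : Fin n → polyS n)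
    (hinv : ∀ i, ∀ M ∈ G, gammaAct n M (φ i) = φ i)
    (hdet : (jacMat φ).det ≠ 0)
    -- the extension of the action on `S` to field automorphisms of `L`
    (σ : GL (Fin n) ℂ → (fracL n ≃ₐ[ℂ] fracL n))
    (hσ : ∀ M : GL (Fin n) ℂ, ∀ f : polyS n, σ M (toL n f) = toL n (gammaAct n M f)) :
    -- the subfield of `L` generated by the fixed field `L^G` together with
    -- the entries of the Jacobian matrix is all of `L`
    Subfield.closure ({a : fracL n | ∀ M ∈ G, σ M a = a} ∪
      Set.range (fun p : Fin n × Fin n => toL n (jacMat φ p.1 p.2))) = ⊤ := by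
  have hone : σ 1 = 1 := aux_ext_s7 _ _ fun f => by
    rw [hσ, aux_one]; rfl
  have hmul : ∀ M N, σ (M * N) = σ M * σ N := fun M N => aux_ext_s7 _ _ fun f => by
    rw [hσ, aux_mul, AlgEquiv.mul_apply, hσ, hσ]; rfl
  let ρ : G →* (fracL n ≃ₐ[ℂ] fracL n) :=
    { toFun := fun g => σ g
      map_one' := hone
      map_mul' := fun a b => hmul a b }
  letI : MulSemiringAction G (fracL n) := MulSemiringAction.compHom (fracL n) ρ
  have hsmul : ∀ (g : G) (a : fracL n), g • a = σ g a := fun g a => rfl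
  have key := aux_gal (L := fracL n) (G := G)
    (Set.range (fun p : Fin n × Fin n => toL n (jacMat φ p.1 p.2))) (by
      intro g hg x
      have : (g : GL (Fin n) ℂ) = 1 := by
        refine aux_triv n φ g (fun i => hinv i g g.2) hdet fun i j => ?_
        have h := hg _ ⟨(i, j), rfl⟩
        rw [hsmul, hσ] at h
        exact IsFractionRing.injective (polyS n) (fracL n) h
      rw [hsmul, this, hone]; rfl)
  rw [← key]
  congr 2
  ext a
  simp only [Set.mem_ofPred_eq, hsmul, Subtype.forall]
end

section
/- Let n ≥ 1, let S = ℂ[x_1,…,x_n], let L be the fraction field of S, and let φ_1,…,φ_n ∈ S be algebraically independent with each φ_i homogeneous of degree d_i ≥ 1. Fix ℓ ∈ {1,…,n}, let B_ℓ be the n×n matrix over S with (i,j) entry Σ_{k=1}^n adj(J_φ)_{kℓ}·∂(∂φ_i/∂x_j)/∂x_k, and set P_ℓ := B_ℓ·adj(J_φ), an n×n matrix over S. Then: (a) viewed over L, P_ℓ = det(J_φ)²·A_ℓ, where A_ℓ := (D_ℓ J_φ)·J_φ^{-1} with D_ℓ the derivation on L determined by D_ℓ(φ_i) = δ_{iℓ};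 and (b) the (i,j) entry of P_ℓ is a homogeneous polynomial of degree d_i − 2 + Σ_{k≠ℓ}(d_k − 1) + Σ_{k≠j}(d_k − 1). -/
open MvPolynomial

lemma aux_D {n : ℕ} (D : Derivation ℂ (fracL n) (fracL n)) (p : polyS n) :
    D (toL n p) = ∑ k, toL n (MvPolynomial.pderiv k p) * D (toL n (X k)) := by
  induction p using MvPolynomial.induction_on with
  | C a =>
    have h : toL n (C a) = algebraMap ℂ (fracL n) a := by
      rw [IsScalarTower.algebraMap_apply ℂ (polyS n) (fracL n)]
      rfl
    rw [h]
    simp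
  | add p q hp hq =>
    simp only [map_add, hp, hq, add_mul, Finset.sum_add_distrib]
  | mul_X p i hp =>
    rw [map_mul, Derivation.leibniz, hp]
    simp only [Derivation.leibniz, pderiv_X, smul_eq_mul, map_add, map_mul, add_mul,
      Finset.sum_add_distrib]
    congr 1
    · rw [Finset.sum_eq_single i]
      · simp
      · intro b _ hb
        simp [hb.symm]
      · simp
    · rw [Finset.mul_sum]
      exact Finset.sum_congr rfl fun k _ => by ring

lemma aux_det {n : ℕ} (M : Matrix (Fin n) (Fin n) (polyS n)) (e : Fin n → ℕ)
    (h : ∀ i j, (M i j).IsHomogeneous (e i)) : M.det.IsHomogeneous (∑ i, e i) := by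
  rw [← Matrix.det_transpose, Matrix.det_apply]
  refine IsHomogeneous.sum _ _ _ fun σ _ => ?_
  have h1 : (∏ i, M.transpose (σ i) i).IsHomogeneous (∑ i, e i) :=
    IsHomogeneous.prod _ _ _ fun i _ => h i (σ i)
  rcases Int.units_eq_one_or (Equiv.Perm.sign σ) with h2 | h2 <;> rw [h2]
  · simpa using h1
  · simpa using h1.neg

lemma aux_adj {n : ℕ} (M : Matrix (Fin n) (Fin n) (polyS n)) (e : Fin n → ℕ)
    (h : ∀ i j, (M i j).IsHomogeneous (e i)) (k ℓ : Fin n) :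
    (M.adjugate k ℓ).IsHomogeneous (∑ i ∈ Finset.univ.erase ℓ, e i) := by
  rw [Matrix.adjugate_apply]
  have : ∑ i ∈ Finset.univ.erase ℓ, e i = ∑ i, (if i = ℓ then 0 else e i) := by
    rw [← Finset.add_sum_erase Finset.univ _ (Finset.mem_univ ℓ)]
    simp only [if_true, zero_add]
    exact Finset.sum_congr rfl fun i hi => by simp [Finset.ne_of_mem_erase hi]
  rw [this]
  apply aux_det
  intro i j
  by_cases hi : i = ℓ
  · subst hi
    simp only [Matrix.updateRow_self, if_true, Pi.single_apply]
    split_ifs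
    · exact isHomogeneous_one _ _
    · exact isHomogeneous_zero _ _ _
  · simp only [Matrix.updateRow_ne hi, if_neg hi]
    exact h i j

theorem stmt11 (n : ℕ) (hn : 1 ≤ n) (φ : Fin n → polyS n)
    (hφ : AlgebraicIndependent ℂ φ) (d : Fin n → ℕ)
    (hd : ∀ i, 1 ≤ d i) (hhom : ∀ i, (φ i).IsHomogeneous (d i))
    (ℓ : Fin n)
    (B : Matrix (Fin n) (Fin n) (polyS n))
    (hB : B = Matrix.of fun i j =>
      ∑ k, (jacMat φ).adjugate k ℓ * MvPolynomial.pderiv k (MvPolynomial.pderiv j (φ i)))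
    (P : Matrix (Fin n) (Fin n) (polyS n)) (hP : P = B * (jacMat φ).adjugate)
    -- `D` is the derivation on `L` determined by `D(φ_i) = δ_{i ℓ}`
    (D : Derivation ℂ (fracL n) (fracL n))
    (hD : ∀ i, D (toL n (φ i)) = if i = ℓ then 1 else 0)
    (A : Matrix (Fin n) (Fin n) (fracL n))
    (hA : A = (Matrix.of fun i j => D (((jacMat φ).map (toL n)) i j)) *
      ((jacMat φ).map (toL n))⁻¹) :
    -- (a): viewed over `L`, `P = det(J_φ)² • A`
    P.map (toL n) = (toL n ((jacMat φ).det)) ^ 2 • A ∧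
    -- (b): homogeneity of the entries of `P`
    (∀ i j, (P i j).IsHomogeneous
      (d i - 2 + ∑ k ∈ Finset.univ.erase ℓ, (d k - 1) +
        ∑ k ∈ Finset.univ.erase j, (d k - 1))) := by
  have hJ : ∀ i j, (jacMat φ i j).IsHomogeneous (d i - 1) := fun i j => (hhom i).pderiv
  constructor
  · have hv : ((jacMat φ).map (toL n)).mulVec (fun k => D (toL n (X k))) = Pi.single ℓ 1 := by
      ext i
      rw [Pi.single_apply, ← hD i, aux_D]
      rfl
    have hadj : ((jacMat φ).map (toL n)).adjugate = (jacMat φ).adjugate.map (toL n) :=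
      ((toL n).map_adjugate (jacMat φ)).symm
    have hdet : ((jacMat φ).map (toL n)).det = toL n (jacMat φ).det :=
      ((toL n).map_det (jacMat φ)).symm
    have hk : ∀ k, toL n (jacMat φ).det * D (toL n (X k)) =
        toL n ((jacMat φ).adjugate k ℓ) := by
      intro k
      have h := congrArg (fun w => ((jacMat φ).map (toL n)).adjugate.mulVec w k) hv
      simp only [Matrix.mulVec_mulVec, Matrix.adjugate_mul, Matrix.smul_mulVec,
        Matrix.one_mulVec, Pi.smul_apply, smul_eq_mul, Matrix.mulVec_single_one, hdet] at h
      rw [hadj] at h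
      exact h
    have hBm : B.map (toL n) = toL n (jacMat φ).det •
        (Matrix.of fun i j => D (((jacMat φ).map (toL n)) i j)) := by
      ext i j
      simp only [hB, Matrix.map_apply, Matrix.of_apply, Matrix.smul_apply, smul_eq_mul,
        map_sum, map_mul, ← hk]
      rw [aux_D, Finset.mul_sum]
      refine Finset.sum_congr rfl fun k _ => ?_
      simp only [jacMat, Matrix.of_apply]
      ring
    rw [hP, Matrix.map_mul, hBm, hA, Matrix.inv_def, hadj, hdet, Ring.inverse_eq_inv',
      Matrix.mul_smul, smul_smul, Matrix.smul_mul]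
    congr 1
    by_cases h0 : toL n (jacMat φ).det = 0
    · rw [h0]; simp
    · field_simp
  · intro i j
    rw [hP, Matrix.mul_apply]
    refine IsHomogeneous.sum _ _ _ fun m _ => ?_
    refine IsHomogeneous.mul ?_ (aux_adj _ (fun i => d i - 1) hJ m j)
    rw [hB, Matrix.of_apply]
    refine IsHomogeneous.sum _ _ _ fun k _ => ?_
    rw [add_comm]
    exact (aux_adj _ (fun i => d i - 1) hJ k ℓ).mul (hJ i m).pderiv
end

section
/- (Chevalley–Shephard–Todd) Let n ≥ 1, let S = ℂ[x_1,…,x_n], and let G be a finite subgroup of GL_n(ℂ). Call M ∈ G a reflection if M ≠ 1 and the fixed subspace {v ∈ ℂ^n : Mv = v} has dimension n − 1. Then G is generated by its reflections if and only if there exist polynomials φ_1,…,φ_n ∈ S, each homogeneous (of some positive degree) and together algebraically independent over ℂ, such that the ℂ-subalgebra S^G of G-invariant polynomials equals the ℂ-subalgebra generated by φ_1,…,φ_n. -/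
open MvPolynomial

/-- `M` is a (complex) reflection: `M ≠ 1` and its fixed subspace
`{v : ℂⁿ | M v = v}` has dimension `n - 1`. -/
def IsReflection (n : ℕ) (M : GL (Fin n) ℂ) : Prop :=
  M ≠ 1 ∧ Module.finrank ℂ
    (LinearMap.ker (Matrix.toLin' ((M : Matrix (Fin n) (Fin n) ℂ)) - LinearMap.id)) = n - 1

namespace CST

variable {n : ℕ}

lemma eval_gamma (M : GL (Fin n) ℂ) (f : polyS n) (v : Fin n → ℂ) :
    eval v (gammaAct n M f) =
      eval (((M⁻¹ : GL (Fin n) ℂ) : Matrix (Fin n) (Fin n) ℂ).mulVec v) f := by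
  unfold gammaAct
  induction f using MvPolynomial.induction_on with
  | C a => simp
  | add p q hp hq => rw [map_add, map_add, map_add, hp, hq]
  | mul_X p i hp => rw [map_mul, map_mul, map_mul, hp]; simp [Matrix.mulVec, dotProduct]

lemma gamma_mul (M N : GL (Fin n) ℂ) (f : polyS n) :
    gammaAct n (M * N) f = gammaAct n M (gammaAct n N f) := by
  apply MvPolynomial.funext
  intro v
  simp [eval_gamma, Matrix.mulVec_mulVec]

lemma gamma_one (f : polyS n) : gammaAct n 1 f = f := by
  apply MvPolynomial.funext
  intro v
  simp [eval_gamma]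

lemma gamma_hom (M : GL (Fin n) ℂ) {f : polyS n} {d : ℕ} (hf : f.IsHomogeneous d) :
    (gammaAct n M f).IsHomogeneous d := by
  have h1 : ∀ i, (∑ k, MvPolynomial.C (((M⁻¹ : GL (Fin n) ℂ) :
    Matrix (Fin n) (Fin n) ℂ) i k) * MvPolynomial.X k : polyS n).IsHomogeneous 1 := fun i =>
      IsHomogeneous.sum _ _ _ fun k _ => isHomogeneous_C_mul_X _ _
  have h2 := hf.aeval _ h1
  rw [one_mul] at h2
  exact h2

lemma gamma_hc (M : GL (Fin n) ℂ) (f : polyS n) (d : ℕ) :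
    homogeneousComponent d (gammaAct n M f) = gammaAct n M (homogeneousComponent d f) := by
  conv_lhs => rw [← sum_homogeneousComponent f]
  rw [map_sum, map_sum]
  have : ∀ i, homogeneousComponent d (gammaAct n M (homogeneousComponent i f)) =
      if d = i then gammaAct n M (homogeneousComponent d f) else 0 := by
    intro i
    rw [homogeneousComponent_of_mem (gamma_hom M (homogeneousComponent_isHomogeneous i f))]
    split_ifs with h
    · rw [h]
    · rfl
  simp only [this]
  rw [Finset.sum_ite_eq]
  split_ifs with h
  · rfl
  · rw [homogeneousComponent_eq_zero, map_zero]
    simpa using h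

lemma gamma_totalDegree (M : GL (Fin n) ℂ) (f : polyS n) :
    (gammaAct n M f).totalDegree ≤ f.totalDegree := by
  conv_lhs => rw [← sum_homogeneousComponent f]
  rw [map_sum]
  refine (totalDegree_finsetSum _ _).trans (Finset.sup_le fun i hi => ?_)
  refine ((gamma_hom M (homogeneousComponent_isHomogeneous i f)).totalDegree_le).trans ?_
  simpa [Nat.lt_succ_iff] using hi

/-- invariants -/
def Inv (G : Subgroup (GL (Fin n) ℂ)) (f : polyS n) : Prop := ∀ M ∈ G, gammaAct n M f = f

lemma Inv.hc {G : Subgroup (GL (Fin n) ℂ)} {f : polyS n} (hf : Inv G f) (d : ℕ) :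
    Inv G (homogeneousComponent d f) := by
  intro M hM
  rw [← gamma_hc, hf M hM]

lemma Inv.closure {G : Subgroup (GL (Fin n) ℂ)} {s : Set (GL (Fin n) ℂ)}
    (hs : Subgroup.closure s = G) {f : polyS n} (hf : ∀ M ∈ s, gammaAct n M f = f) : Inv G f := by
  subst hs
  intro M hM
  induction hM using Subgroup.closure_induction with
  | mem x hx => exact hf x hx
  | one => exact gamma_one f
  | mul x y _ _ hx hy => rw [gamma_mul, hy, hx]
  | inv x _ hx =>
    conv_lhs => rw [← hx]
    rw [← gamma_mul]; simp [gamma_one]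

/-- the invariant subalgebra -/
def invAlg (G : Subgroup (GL (Fin n) ℂ)) : Subalgebra ℂ (polyS n) where
  carrier := {f | Inv G f}
  mul_mem' := fun {a b} ha hb M hM => by rw [map_mul, ha M hM, hb M hM]
  add_mem' := fun {a b} ha hb M hM => by rw [map_add, ha M hM, hb M hM]
  algebraMap_mem' := fun r M _ => AlgHom.commutes _ _

lemma mem_invAlg {G : Subgroup (GL (Fin n) ℂ)} {f : polyS n} : f ∈ invAlg G ↔ Inv G f := Iff.rfl

/-- Reynolds sum -/
noncomputable def rey (G : Subgroup (GL (Fin n) ℂ)) [Fintype G] (f : polyS n) : polyS n :=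
  ∑ g : G, gammaAct n g f

lemma rey_inv (G : Subgroup (GL (Fin n) ℂ)) [Fintype G] (f : polyS n) : Inv G (rey G f) := by
  intro M hM
  unfold rey
  rw [map_sum]
  simp only [← gamma_mul]
  exact Fintype.sum_equiv (Equiv.mulLeft (⟨M, hM⟩ : G)) _ _ (fun x => by simp)

/-- The Hilbert ideal -/
noncomputable def hilb (G : Subgroup (GL (Fin n) ℂ)) : Ideal (polyS n) :=
  Ideal.span {f | Inv G f ∧ ∃ d, 1 ≤ d ∧ f.IsHomogeneous d}

lemma hilb_of_inv {G : Subgroup (GL (Fin n) ℂ)} {f : polyS n} (hf : Inv G f) :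
    f - C (constantCoeff f) ∈ hilb G := by
  have : f = C (constantCoeff f) + ∑ i ∈ Finset.range f.totalDegree, homogeneousComponent (i+1) f := by
    conv_lhs => rw [← sum_homogeneousComponent f, Finset.sum_range_succ', add_comm]
    simp [homogeneousComponent_zero, constantCoeff_eq]
  rw [sub_eq_iff_eq_add'.mpr this]
  exact Ideal.sum_mem _ fun i _ => Ideal.subset_span ⟨hf.hc _, i+1, by omega,
    homogeneousComponent_isHomogeneous _ _⟩

lemma hilb_gamma {G : Subgroup (GL (Fin n) ℂ)} {M : GL (Fin n) ℂ} (hM : M ∈ G) {f : polyS n}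
    (hf : f ∈ hilb G) : gammaAct n M f ∈ hilb G := by
  have : hilb G ≤ (hilb G).comap (gammaAct n M) := by
    conv_lhs => unfold hilb
    rw [Ideal.span_le]
    rintro g ⟨h1, h2⟩
    simp only [Ideal.coe_comap, Set.mem_preimage, SetLike.mem_coe]
    erw [h1 M hM]
    exact Ideal.subset_span ⟨h1, h2⟩
  exact this hf

lemma cc_hom {f : polyS n} {d : ℕ} (hd : 1 ≤ d) (h : f.IsHomogeneous d) : constantCoeff f = 0 := by
  rw [constantCoeff_eq]
  apply h.coeff_eq_zero
  simp; omega

/-- local lemma: -/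
lemma local_lemma {ι : Type*} {s : Set ι} {g : ι → polyS n} {e : ι → ℕ}
    (hg : ∀ i, (g i).IsHomogeneous (e i)) {F u : polyS n} {D : ℕ} (hF : F.IsHomogeneous D)
    (hu : constantCoeff u ≠ 0) (h : F * u ∈ Ideal.span (g '' s)) : F ∈ Ideal.span (g '' s) := by
  letI : GradedRing (homogeneousSubmodule (Fin n) ℂ) := MvPolynomial.gradedAlgebra
  have hI : (Ideal.span (g '' s)).IsHomogeneous (homogeneousSubmodule (Fin n) ℂ) := by
    apply Ideal.homogeneous_span
    rintro _ ⟨i, _, rfl⟩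
    exact ⟨e i, hg i⟩
  have h1 := homogeneousComponent_mem_of_mem hI h D
  have h2 : homogeneousComponent D (F * u) = F * C (constantCoeff u) := by
    rw [← sum_homogeneousComponent u, Finset.mul_sum, map_sum]
    have : ∀ i, homogeneousComponent D (F * homogeneousComponent i u) =
        if i = 0 then F * homogeneousComponent 0 u else 0 := by
      intro i
      rw [homogeneousComponent_of_mem (hF.mul (homogeneousComponent_isHomogeneous i u))]
      split_ifs with h h h
      · rw [h]
      · omega
      · omega
      · rfl
    simp only [this]
    rw [sum_homogeneousComponent, Finset.sum_ite_eq']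
    simp [homogeneousComponent_zero, constantCoeff_eq]
  rw [h2] at h1
  have := Ideal.mul_mem_right (C (constantCoeff u)⁻¹) _ h1
  rwa [mul_assoc, ← C_mul, mul_inv_cancel₀ hu, C_1, mul_one] at this

lemma rank_refl {M : GL (Fin n) ℂ} (hn : 1 ≤ n) (hM : IsReflection n M) :
    ∃ a b : Fin n → ℂ, (M : Matrix (Fin n) (Fin n) ℂ) - 1 = Matrix.vecMulVec a b := by
  set L := Matrix.toLin' ((M : Matrix (Fin n) (Fin n) ℂ)) - LinearMap.id with hL
  have h1 := LinearMap.finrank_range_add_finrank_ker L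
  rw [hM.2] at h1
  simp only [Module.finrank_fintype_fun_eq_card, Fintype.card_fin] at h1
  have h2 : Module.finrank ℂ (LinearMap.range L) = 1 := by omega
  obtain ⟨a, -, ha⟩ := finrank_eq_one_iff'.mp h2
  choose b hb using fun k : Fin n => ha ⟨L (Pi.single k 1), ⟨_, rfl⟩⟩
  refine ⟨a, b, ?_⟩
  ext i k
  have := congrFun (congrArg Subtype.val (hb k)) i
  simp [hL, Pi.single_apply] at this
  rw [Matrix.sub_apply, Matrix.vecMulVec_apply, mul_comm, this, Matrix.one_apply]

lemma refl_div {M : GL (Fin n) ℂ} (hn : 1 ≤ n) (hM : IsReflection n M) :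
    ∃ l : polyS n, l ≠ 0 ∧ l.IsHomogeneous 1 ∧ ∀ f, ∃ h, f - gammaAct n M f = l * h := by
  obtain ⟨a, b, hab⟩ := rank_refl hn hM
  set l : polyS n := ∑ k, C (b k) * X k with hl
  have key : ((M⁻¹ : GL (Fin n) ℂ) : Matrix (Fin n) (Fin n) ℂ) - 1 = 
      Matrix.vecMulVec (-((M⁻¹ : GL (Fin n) ℂ) : Matrix (Fin n) (Fin n) ℂ).mulVec a) b := by
    have h1 : ((M⁻¹ : GL (Fin n) ℂ) : Matrix (Fin n) (Fin n) ℂ) * M = 1 := by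
      rw [← Units.val_mul]; simp
    rw [Matrix.neg_vecMulVec, ← Matrix.mul_vecMulVec, ← hab, mul_sub, h1]
    simp
  set c := (-((M⁻¹ : GL (Fin n) ℂ) : Matrix (Fin n) (Fin n) ℂ).mulVec a)
  have hX : ∀ i, gammaAct n M (X i) = X i + C (c i) * l := by
    intro i
    have h2 : ∀ k, ((M⁻¹ : GL (Fin n) ℂ) : Matrix (Fin n) (Fin n) ℂ) i k =
        (1 : Matrix (Fin n) (Fin n) ℂ) i k + c i * b k := by
      intro k
      rw [← Matrix.vecMulVec_apply, ← key, Matrix.sub_apply]; ring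
    simp only [gammaAct, aeval_X, h2]
    simp only [Matrix.one_apply, map_add, add_mul, Finset.sum_add_distrib, hl, Finset.mul_sum]
    congr 1
    · simp [apply_ite C, ite_mul]
    · simp [mul_assoc]
  refine ⟨l, ?_, IsHomogeneous.sum _ _ _ fun k _ => isHomogeneous_C_mul_X _ _, ?_⟩
  · intro h0
    apply hM.1
    have : M⁻¹ = 1 := by
      apply Units.ext
      rw [← sub_eq_zero, Units.val_one, key]
      have hb : b = 0 := by
        ext k
        have := congrArg (coeff (Finsupp.single k 1)) h0
        simpa [hl, coeff_sum, coeff_C_mul, coeff_X, Finsupp.single_left_inj] using this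
      rw [hb, Matrix.vecMulVec_zero]
    simpa using this
  · intro f
    suffices h : l ∣ f - gammaAct n M f from h
    induction f using MvPolynomial.induction_on with
    | C a => 
      rw [← MvPolynomial.algebraMap_eq, AlgHom.commutes, sub_self]; exact dvd_zero _
    | add p q hp hq => 
      rw [map_add, add_sub_add_comm]; exact dvd_add hp hq
    | mul_X p i hp =>
      rw [map_mul, hX]
      have : p * X i - gammaAct n M p * (X i + C (c i) * l) =
        (p - gammaAct n M p) * X i - l * (C (c i) * gammaAct n M p) := by ring
      rw [this]
      exact dvd_sub (hp.mul_right _) (dvd_mul_right _ _)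

lemma key_lemma (hn : 1 ≤ n) {G : Subgroup (GL (Fin n) ℂ)} [Fintype G]
    (hG : Subgroup.closure {M : GL (Fin n) ℂ | M ∈ G ∧ IsReflection n M} = G)
    {ι : Type*} [DecidableEq ι] (A : Finset ι) (g : ι → polyS n) (e : ι → ℕ)
    (hg : ∀ i, (g i).IsHomogeneous (e i))
    (hinv : ∀ i, Inv G (g i)) (j : ι) (hj : j ∈ A)
    (hmin : g j ∉ Ideal.span (g '' (A.erase j : Finset ι))) (N : ℕ) :
    ∀ (h : ι → polyS n), (h j).totalDegree < N → ∑ i ∈ A, g i * h i = 0 → h j ∈ hilb G := by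
  induction N with
  | zero => intro h hh; omega
  | succ N ih =>
    intro h hdeg hsum
    have hrefl : ∀ s ∈ G, IsReflection n s → h j - gammaAct n s (h j) ∈ hilb G := by
      intro s hsG hs
      obtain ⟨l, hl0, hl1, hl⟩ := refl_div hn hs
      choose h' hh' using fun i => hl (h i)
      rw [hh']
      apply Ideal.mul_mem_left
      by_cases h0 : h' j = 0
      · rw [h0]; exact zero_mem _
      apply ih h'
      · have h1 : (h j - gammaAct n s (h j)).totalDegree ≤ (h j).totalDegree :=
          (totalDegree_sub _ _).trans (max_le le_rfl (gamma_totalDegree _ _))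
        rw [hh' j, totalDegree_mul_of_isDomain hl0 h0, hl1.totalDegree hl0] at h1
        omega
      · apply mul_left_cancel₀ hl0
        rw [mul_zero, Finset.mul_sum]
        have : ∀ i, l * (g i * h' i) = g i * h i - gammaAct n s (g i * h i) := by
          intro i
          rw [map_mul, hinv i s hsG, ← mul_sub, hh']; ring
        simp only [this]
        rw [Finset.sum_sub_distrib, ← map_sum, hsum]; simp
    have hall : ∀ s ∈ G, h j - gammaAct n s (h j) ∈ hilb G := by
      intro s hs
      rw [← hG] at hs
      induction hs using Subgroup.closure_induction with
      | mem x hx => exact hrefl x hx.1 hx.2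
      | one => rw [gamma_one, sub_self]; exact zero_mem _
      | mul x y hx hy hx' hy' =>
        rw [hG] at hx
        have := add_mem hx' (hilb_gamma hx hy')
        rwa [map_sub, ← gamma_mul, sub_add_sub_cancel] at this
      | inv x hx hx' => 
        rw [hG] at hx
        have := neg_mem (hilb_gamma (inv_mem hx) hx')
        rwa [map_sub, ← gamma_mul, inv_mul_cancel, gamma_one, neg_sub] at this
    have hcard : (Fintype.card G : ℂ) ≠ 0 := by
      exact_mod_cast Fintype.card_ne_zero
    have h1 : C (Fintype.card G : ℂ) * h j - rey G (h j) ∈ hilb G := by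
      have : C (Fintype.card G : ℂ) * h j - rey G (h j) = ∑ g : G, (h j - gammaAct n g (h j)) := by
        simp [rey, Finset.sum_sub_distrib]
      rw [this]
      exact Ideal.sum_mem _ fun s _ => hall s s.2
    have h2 := add_mem h1 (hilb_of_inv (rey_inv G (h j)))
    rw [sub_add_sub_cancel] at h2
    have h3 := Ideal.mul_mem_left _ (C (Fintype.card G : ℂ)⁻¹) h2
    rw [mul_sub, ← mul_assoc, ← C_mul, ← C_mul, inv_mul_cancel₀ hcard, C_1, one_mul] at h3
    set c := (Fintype.card G : ℂ)⁻¹ * constantCoeff (rey G (h j))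
    have hcc : constantCoeff (h j) = c := by
      have : hilb G ≤ RingHom.ker (constantCoeff : polyS n →+* ℂ) := by
        unfold hilb
        rw [Ideal.span_le]
        rintro f ⟨-, d, hd, hf⟩
        exact cc_hom hd hf
      have := this h3
      rw [RingHom.mem_ker, map_sub, constantCoeff_C, sub_eq_zero] at this
      exact this
    by_cases hc : c = 0
    · simpa [hc] using h3
    · exfalso
      apply hmin
      apply local_lemma hg (hg j) (u := h j) (by rwa [hcc])
      rw [← Finset.add_sum_erase _ _ hj] at hsum
      rw [eq_neg_of_add_eq_zero_left hsum]
      apply neg_mem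
      exact Ideal.sum_mem _ fun i hi => Ideal.mul_mem_right _ _ (Ideal.subset_span ⟨i, hi, rfl⟩)

lemma hc_mul {f w : polyS n} {d : ℕ} (hf : f.IsHomogeneous d) (D : ℕ) :
    homogeneousComponent D (w * f) = if d ≤ D then homogeneousComponent (D - d) w * f else 0 := by
  conv_lhs => rw [← sum_homogeneousComponent w]
  rw [Finset.sum_mul, map_sum]
  have : ∀ i, homogeneousComponent D (homogeneousComponent i w * f) =
      if D = i + d then homogeneousComponent i w * f else 0 := by
    intro i
    rw [homogeneousComponent_of_mem ((homogeneousComponent_isHomogeneous i w).mul hf)]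
  simp only [this]
  split_ifs with h
  · have h2 : ∀ i, (D = i + d) = (i = D - d) := fun i => by
      apply propext; omega
    simp only [h2]
    rw [Finset.sum_ite_eq']
    split_ifs with h3
    · rfl
    · rw [homogeneousComponent_eq_zero _ _ (by simp at h3; omega), zero_mul]
  · apply Finset.sum_eq_zero
    intro i _
    rw [if_neg]; omega

lemma rey_mul {G : Subgroup (GL (Fin n) ℂ)} [Fintype G] {f w : polyS n} (hf : Inv G f) :
    rey G (w * f) = rey G w * f := by
  unfold rey
  rw [Finset.sum_mul]
  exact Finset.sum_congr rfl fun g _ => by rw [map_mul, hf g g.2]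

lemma rey_of_inv {G : Subgroup (GL (Fin n) ℂ)} [Fintype G] {f : polyS n} (hf : Inv G f) :
    rey G f = C (Fintype.card G : ℂ) * f := by
  unfold rey
  rw [Finset.sum_congr rfl fun (g : G) _ => hf g g.2]
  simp

lemma gen_lemma {G : Subgroup (GL (Fin n) ℂ)} [Fintype G] {ι : Type*} [Fintype ι]
    (f : ι → polyS n) (d : ι → ℕ) (hd : ∀ i, 1 ≤ d i) (hf : ∀ i, (f i).IsHomogeneous (d i))
    (hinv : ∀ i, Inv G (f i)) (hspan : Ideal.span (Set.range f) = hilb G) :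
    invAlg G = Algebra.adjoin ℂ (Set.range f) := by
  apply le_antisymm
  · have main : ∀ D, ∀ F, Inv G F → F.IsHomogeneous D → F ∈ Algebra.adjoin ℂ (Set.range f) := by
      intro D
      induction D using Nat.strong_induction_on with
      | _ D ih =>
      intro F hF hD
      rcases Nat.eq_zero_or_pos D with h0 | h0
      · subst h0
        rw [← homogeneousComponent_of_mem (m := 0) (n := 0) hD |>.trans (if_pos rfl),
          homogeneousComponent_zero]
        exact Subalgebra.algebraMap_mem _ _
      · have h1 : F ∈ Ideal.span (Set.range f) := by
          rw [hspan]; exact Ideal.subset_span ⟨hF, D, h0, hD⟩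
        obtain ⟨w, hw⟩ := (Ideal.mem_span_range_iff_exists_fun).mp h1
        have hcard : (Fintype.card G : ℂ) ≠ 0 := by
          exact_mod_cast Fintype.card_ne_zero
        have h2 : C (Fintype.card G : ℂ) * F = ∑ i, rey G (w i) * f i := by
          rw [← rey_of_inv hF, ← hw]
          simp only [← rey_mul (hinv _)]
          unfold rey
          rw [Finset.sum_comm]
          simp
        have h3 := congrArg (homogeneousComponent D) h2
        rw [homogeneousComponent_C_mul, homogeneousComponent_of_mem hD, if_pos rfl, map_sum] at h3
        have h4 : F = C (Fintype.card G : ℂ)⁻¹ * ∑ i, homogeneousComponent D (rey G (w i) * f i) := by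
          rw [← h3, ← mul_assoc, ← C_mul, inv_mul_cancel₀ hcard, C_1, one_mul]
        rw [h4]
        apply mul_mem (Subalgebra.algebraMap_mem _ _)
        apply sum_mem
        intro i _
        rw [hc_mul (hf i)]
        split_ifs with h5
        · refine mul_mem ?_ (Algebra.subset_adjoin (Set.mem_range_self i))
          exact ih _ (by have := hd i; omega) _ ((rey_inv G _).hc _)
            (homogeneousComponent_isHomogeneous _ _)
        · exact zero_mem _
    intro F hF
    rw [← sum_homogeneousComponent F]
    exact sum_mem fun i _ => main i _ (Inv.hc hF i) (homogeneousComponent_isHomogeneous _ _)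
  · rw [Algebra.adjoin_le_iff]
    rintro _ ⟨i, rfl⟩
    exact hinv i

lemma exists_min (G : Subgroup (GL (Fin n) ℂ)) : ∃ T : Finset (polyS n),
    (∀ f ∈ T, Inv G f ∧ ∃ d, 1 ≤ d ∧ f.IsHomogeneous d) ∧
    Ideal.span (T : Set (polyS n)) = hilb G ∧
    ∀ f ∈ T, f ∉ Ideal.span ((T : Set (polyS n)) \ {f}) := by
  classical
  have hfg : (hilb G).FG := IsNoetherian.noetherian _
  obtain ⟨T0, hT0, hT1⟩ := (Submodule.fg_span_iff_fg_span_finset_subset _).mp hfg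
  obtain ⟨T, hT⟩ := exists_minimal_of_wellFoundedLT (fun T : Finset (polyS n) =>
    (∀ f ∈ T, Inv G f ∧ ∃ d, 1 ≤ d ∧ f.IsHomogeneous d) ∧
    Ideal.span (T : Set (polyS n)) = hilb G) ⟨T0, fun f hf => hT0 hf, hT1.symm⟩
  refine ⟨T, hT.1.1, hT.1.2, ?_⟩
  intro f hf hmem
  have h1 := hT.2 (y := T.erase f) ⟨fun g hg => hT.1.1 g (Finset.mem_of_mem_erase hg), ?_⟩
    (Finset.erase_subset _ _)
  · exact Finset.notMem_erase f T (h1 hf)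
  · rw [← hT.1.2]
    apply le_antisymm
    · exact Ideal.span_mono (by simp)
    · rw [Ideal.span_le]
      intro g hg
      by_cases hgf : g = f
      · rw [hgf]; simpa using hmem
      · exact Ideal.subset_span (by simpa [hgf] using hg)

lemma chain_rule {ι κ : Type*} [Fintype ι] (f : ι → MvPolynomial κ ℂ)
    (P : MvPolynomial ι ℂ) (k : κ) :
    pderiv k (aeval f P) = ∑ i, aeval f (pderiv i P) * pderiv k (f i) := by
  classical
  induction P using MvPolynomial.induction_on with
  | C a => simp
  | add p q hp hq => simp only [map_add, hp, hq, add_mul, Finset.sum_add_distrib]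
  | mul_X p i hp =>
    simp only [map_mul, pderiv_mul, hp, aeval_X, map_add, add_mul, Finset.sum_add_distrib]
    congr 1
    · rw [Finset.sum_mul]; exact Finset.sum_congr rfl fun _ _ => by ring
    · simp [pderiv_X, Pi.single_apply, mul_ite, ite_mul]

lemma aeval_wh {ι : Type*} [Fintype ι] (f : ι → polyS n) (d : ι → ℕ)
    (hf : ∀ i, (f i).IsHomogeneous (d i)) {P : MvPolynomial ι ℂ} {D : ℕ}
    (hP : IsWeightedHomogeneous d P D) : (aeval f P).IsHomogeneous D := by
  rw [aeval_def, eval₂_eq']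
  apply IsHomogeneous.sum
  intro m hm
  have h1 := hP (mem_support_iff.mp hm)
  apply IsHomogeneous.C_mul (r := coeff m P)
  have h2 := IsHomogeneous.prod Finset.univ (fun i => f i ^ m i) (fun i => d i * m i)
    (fun i _ => (hf i).pow _)
  convert h2
  rw [← h1, Finsupp.weight_apply, Finsupp.sum_fintype _ _ (by simp)]
  simp [mul_comm]

lemma aeval_whc {ι : Type*} [Fintype ι] (f : ι → polyS n) (d : ι → ℕ)
    (hf : ∀ i, (f i).IsHomogeneous (d i)) (P : MvPolynomial ι ℂ) (D : ℕ) :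
    aeval f (weightedHomogeneousComponent d D P) = homogeneousComponent D (aeval f P) := by
  have hfin := weightedHomogeneousComponent_finsupp (w := d) P
  conv_rhs => rw [← sum_weightedHomogeneousComponent d P, finsum_eq_sum _ hfin]
  rw [map_sum, map_sum]
  have : ∀ i, homogeneousComponent D (aeval f (weightedHomogeneousComponent d i P)) =
      if D = i then aeval f (weightedHomogeneousComponent d D P) else 0 := by
    intro i
    rw [homogeneousComponent_of_mem (aeval_wh f d hf
      (weightedHomogeneousComponent_isWeightedHomogeneous i P))]
    split_ifs with h
    · rw [h]
    · rfl
  simp only [this]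
  rw [Finset.sum_ite_eq]
  split_ifs with h
  · rfl
  · have h' : weightedHomogeneousComponent d D P = 0 := by
      by_contra h0
      exact h ((Set.Finite.mem_toFinset hfin).mpr h0)
    rw [h', map_zero]

lemma pderiv_wh {ι : Type*} {d : ι → ℕ} {P : MvPolynomial ι ℂ} {D : ℕ}
    (hP : IsWeightedHomogeneous d P D) (i : ι) :
    IsWeightedHomogeneous d (pderiv i P) (D - d i) ∧ (pderiv i P ≠ 0 → d i ≤ D) := by
  by_cases h : d i ≤ D
  · exact ⟨hP.pderiv (by omega), fun _ => h⟩
  · have : pderiv i P = 0 := by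
      ext m
      rw [coeff_pderiv, coeff_zero]
      by_contra h0
      have h1 := hP (left_ne_zero_of_mul h0)
      rw [map_add, Finsupp.weight_single] at h1
      simp at h1; omega
    rw [this]
    exact ⟨isWeightedHomogeneous_zero _ _ _, fun h => absurd rfl h⟩

lemma alg_indep (hn : 1 ≤ n) {G : Subgroup (GL (Fin n) ℂ)} [Fintype G]
    (hG : Subgroup.closure {M : GL (Fin n) ℂ | M ∈ G ∧ IsReflection n M} = G)
    {ι : Type*} [Fintype ι]
    (f : ι → polyS n) (d : ι → ℕ) (hd : ∀ i, 1 ≤ d i) (hf : ∀ i, (f i).IsHomogeneous (d i))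
    (hinv : ∀ i, Inv G (f i)) (hspan : Ideal.span (Set.range f) = hilb G)
    (hmin : ∀ i, f i ∉ Ideal.span (f '' {i}ᶜ)) : AlgebraicIndependent ℂ f := by
  classical
  rw [algebraicIndependent_iff]
  by_contra hcon
  push Not at hcon
  obtain ⟨P0, hP0, hP0'⟩ := hcon
  have hex : ∃ D, ∃ P : MvPolynomial ι ℂ, P ≠ 0 ∧ IsWeightedHomogeneous d P D ∧ aeval f P = 0 := by
    by_contra hno
    push Not at hno
    apply hP0'
    rw [← sum_weightedHomogeneousComponent d P0]
    apply finsum_eq_zero_of_forall_eq_zero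
    intro D
    by_contra h0
    refine hno D _ h0 (weightedHomogeneousComponent_isWeightedHomogeneous _ _) ?_
    rw [aeval_whc f d hf, hP0, map_zero]
  obtain ⟨P, hP, hPw, hPf⟩ := Nat.find_spec hex
  have hmin' := fun D' => Nat.find_min (m := D') hex
  set D := Nat.find hex
  have hD : D ≠ 0 := by
    intro h0
    rw [h0] at hPw
    have h1 : P = C (coeff 0 P) := by
      ext m
      rw [coeff_C]
      split_ifs with h
      · rw [h]
      · by_contra h2
        have h3 := hPw h2
        rw [Finsupp.weight_apply, Finsupp.sum_fintype _ _ (by simp)] at h3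
        apply h
        ext i
        have := (Finset.sum_eq_zero_iff.mp h3) i (Finset.mem_univ _)
        have h4 := hd i
        simp at this
        simp; omega
    rw [h1, aeval_C, algebraMap_eq] at hPf
    exact hP (by rw [h1, C_eq_zero.mp (hPf), C_0])
  set g : ι → polyS n := fun i => aeval f (pderiv i P) with hgdef
  have hg : ∀ i, (g i).IsHomogeneous (D - d i) := fun i => aeval_wh f d hf (pderiv_wh hPw i).1
  have hadj : ∀ Q : MvPolynomial ι ℂ, Inv G (aeval f Q) := by
    intro Q
    rw [← mem_invAlg, gen_lemma f d hd hf hinv hspan, Algebra.adjoin_range_eq_range_aeval]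
    exact ⟨Q, rfl⟩
  have hginv : ∀ i, Inv G (g i) := fun i => hadj _
  obtain ⟨i0, hi0⟩ : ∃ i, g i ≠ 0 := by
    by_contra hno
    push Not at hno
    have h1 : ∀ i, pderiv i P = 0 := by
      intro i
      by_contra h0
      have h2 := pderiv_wh hPw i
      have h3 := h2.2 h0
      have h4 := hd i
      exact hmin' (D - d i) (by omega) ⟨_, h0, h2.1, hno i⟩
    have h2 := hPw.sum_weight_X_mul_pderiv
    simp only [h1, mul_zero, smul_zero, Finset.sum_const_zero] at h2
    rcases smul_eq_zero.mp h2.symm with h | h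
    · exact hD h
    · exact hP h
  obtain ⟨A, hA⟩ := exists_minimal_of_wellFoundedLT (fun A : Finset ι =>
    Ideal.span (g '' (A : Set ι)) = Ideal.span (Set.range g)) ⟨Finset.univ, by simp⟩
  have hAmin : ∀ j ∈ A, g j ∉ Ideal.span (g '' (A.erase j : Finset ι)) := by
    intro j hj hmem
    have h1 := hA.2 (y := A.erase j) ?_ (Finset.erase_subset _ _)
    · exact Finset.notMem_erase j A (h1 hj)
    · show _ = _
      rw [← hA.1]
      apply le_antisymm
      · exact Ideal.span_mono (Set.image_mono (by simp))
      · rw [Ideal.span_le]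
        rintro _ ⟨i, hi, rfl⟩
        by_cases hij : i = j
        · rw [hij]; exact hmem
        · exact Ideal.subset_span ⟨i, by simpa [hij] using hi, rfl⟩
  have hAne : A.Nonempty := by
    rw [Finset.nonempty_iff_ne_empty]
    rintro rfl
    have h1 := hA.1
    simp only [Finset.coe_empty, Set.image_empty, Ideal.span_empty] at h1
    have h2 : g i0 ∈ Ideal.span (Set.range g) := Ideal.subset_span ⟨i0, rfl⟩
    rw [← h1] at h2
    exact hi0 h2
  obtain ⟨j, hj⟩ := hAne
  have hv : ∀ i, ∃ v : ι → polyS n, g i = ∑ a ∈ A, g a * v a ∧ (i ∈ A → v = Pi.single i 1) := by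
    intro i
    by_cases hi : i ∈ A
    · refine ⟨Pi.single i 1, ?_, fun _ => rfl⟩
      simp [Pi.single_apply, hi]
    · have h1 : g i ∈ Ideal.span (g '' (A : Set ι)) := by
        rw [hA.1]; exact Ideal.subset_span ⟨i, rfl⟩
      obtain ⟨v, hv⟩ := Submodule.mem_span_image_finset_iff_exists_fun' _ |>.mp h1
      refine ⟨v, ?_, fun h => absurd h hi⟩
      rw [← hv]
      exact Finset.sum_congr rfl fun a _ => by rw [smul_eq_mul, mul_comm]
  choose v hv1 hv2 using hv
  set h : Fin n → ι → polyS n := fun k a => ∑ i, v i a * pderiv k (f i) with hh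
  have hmem : ∀ k, h k j ∈ hilb G := by
    intro k
    refine key_lemma hn hG A g _ hg hginv j hj (hAmin j hj) _ (h k) (Nat.lt_succ_self _) ?_
    have h1 := chain_rule f P k
    rw [hPf, map_zero] at h1
    rw [h1]
    simp only [hh, Finset.mul_sum]
    rw [Finset.sum_comm]
    refine Finset.sum_congr rfl fun i _ => ?_
    change _ = g i * _
    rw [hv1 i, Finset.sum_mul]
    exact Finset.sum_congr rfl fun a _ => by ring
  rw [← hspan] at hmem
  choose w hw using fun k => (Ideal.mem_span_range_iff_exists_fun).mp (hmem k)
  have heuler : ∑ k, X k * h k j = ∑ i, v i j * (C (d i : ℂ) * f i) := by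
    simp only [hh, Finset.mul_sum]
    rw [Finset.sum_comm]
    refine Finset.sum_congr rfl fun i _ => ?_
    have h1 := (hf i).sum_X_mul_pderiv
    have h2 : (C (d i : ℂ) * f i) = d i • f i := by simp
    rw [h2, ← h1, Finset.mul_sum]
    exact Finset.sum_congr rfl fun a _ => by ring
  have heuler2 : ∑ k, X k * h k j = ∑ i, (∑ k, X k * w k i) * f i := by
    simp only [← hw, Finset.mul_sum, Finset.sum_mul]
    rw [Finset.sum_comm]
    simp only [mul_assoc]
  have hfin : ∑ i, (C (d i : ℂ) * v i j - ∑ k, X k * w k i) * f i = 0 := by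
    simp only [sub_mul, Finset.sum_sub_distrib]
    rw [← heuler2, heuler, sub_eq_zero]
    exact Finset.sum_congr rfl fun a _ => by ring
  apply hmin j
  apply local_lemma hf (hf j) (u := C (d j : ℂ) * v j j - ∑ k, X k * w k j)
  · rw [hv2 j hj]
    have := hd j
    simp; omega
  · rw [← Finset.add_sum_erase _ _ (Finset.mem_univ j)] at hfin
    rw [mul_comm, eq_neg_of_add_eq_zero_left hfin]
    apply neg_mem
    exact Ideal.sum_mem _ fun i hi => Ideal.mul_mem_left _ _ (Ideal.subset_span ⟨i, by simpa using hi, rfl⟩)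

lemma integral_inv (G : Subgroup (GL (Fin n) ℂ)) [Fintype G] (b : polyS n) :
    IsIntegral (invAlg G) b := by
  let p : Polynomial (polyS n) := ∏ g : G, (Polynomial.X - Polynomial.C (gammaAct n g b))
  have hp : p.Monic := Polynomial.monic_prod_of_monic _ _ fun g _ => Polynomial.monic_X_sub_C _
  have hc : p ∈ Polynomial.lifts (algebraMap (invAlg G) (polyS n)) := by
    rw [Polynomial.lifts_iff_coeff_lifts]
    intro k
    refine ⟨⟨p.coeff k, ?_⟩, rfl⟩
    rw [mem_invAlg]
    intro M hM
    have h1 : p.map (gammaAct n M : polyS n →+* polyS n) = p := by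
      simp only [p, Polynomial.map_prod, Polynomial.map_sub, Polynomial.map_X, Polynomial.map_C]
      exact Fintype.prod_equiv (Equiv.mulLeft (⟨M, hM⟩ : G)) _ _ (fun x => by simp [gamma_mul])
    have h2 := congrArg (fun q => q.coeff k) h1
    simpa [Polynomial.coeff_map] using h2
  obtain ⟨q, hq1, -, hq2⟩ := Polynomial.lifts_and_natDegree_eq_and_monic hc hp
  refine ⟨q, hq2, ?_⟩
  rw [← Polynomial.eval_map, hq1, Polynomial.eval_prod]
  exact Finset.prod_eq_zero (Finset.mem_univ 1) (by simp [gamma_one])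

theorem chevalley (hn : 1 ≤ n) {G : Subgroup (GL (Fin n) ℂ)} [Fintype G]
    (hG : Subgroup.closure {M : GL (Fin n) ℂ | M ∈ G ∧ IsReflection n M} = G) :
    ∃ (φ : Fin n → polyS n) (d : Fin n → ℕ),
      (∀ i, 1 ≤ d i) ∧ (∀ i, (φ i).IsHomogeneous (d i)) ∧
      AlgebraicIndependent ℂ φ ∧ invAlg G = Algebra.adjoin ℂ (Set.range φ) := by
  classical
  obtain ⟨T, hT1, hT2, hT3⟩ := exists_min G
  choose d hd1 hd2 using fun i : T => (hT1 i i.2).2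
  have hinv : ∀ i : T, Inv G (i : polyS n) := fun i => (hT1 i i.2).1
  have hspan : Ideal.span (Set.range (fun i : T => (i : polyS n))) = hilb G := by
    rw [← hT2]; congr 1; simp
  have hmin : ∀ i : T, (i : polyS n) ∉ Ideal.span ((fun i : T => (i : polyS n)) '' {i}ᶜ) := by
    intro i hi
    apply hT3 i i.2
    convert hi using 2
    ext x
    simp only [Set.mem_sdiff, Set.mem_singleton_iff, Set.mem_image, Set.mem_compl_iff]
    constructor
    · rintro ⟨h1, h2⟩
      exact ⟨⟨x, h1⟩, fun h => h2 (congrArg Subtype.val h), rfl⟩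
    · rintro ⟨y, h1, rfl⟩
      exact ⟨y.2, fun h => h1 (Subtype.ext h)⟩
  have hai := alg_indep hn hG _ d hd1 hd2 hinv hspan hmin
  have hgen := gen_lemma _ d hd1 hd2 hinv hspan
  have htb : IsTranscendenceBasis ℂ (fun i : T => (i : polyS n)) := by
    rw [hai.isTranscendenceBasis_iff_isAlgebraic, ← hgen]
    exact ⟨fun b => (integral_inv G b).isAlgebraic⟩
  have hcard := htb.cardinalMk_eq_trdeg
  rw [MvPolynomial.trdeg_of_isDomain] at hcard
  have e : Fin n ≃ T := by
    have h1 : Cardinal.mk T = Cardinal.mk (Fin n) := by simpa using hcard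
    exact (Classical.choice (Cardinal.eq.mp h1)).symm
  refine ⟨fun i => (e i : polyS n), fun i => d (e i), fun i => hd1 _, fun i => hd2 _,
    hai.comp _ e.injective, ?_⟩
  rw [hgen]
  congr 1
  exact (e.surjective.range_comp (fun i : T => (i : polyS n))).symm

lemma exists_pt (hn : 1 ≤ n) (G H : Subgroup (GL (Fin n) ℂ)) [Fintype G]
    (hH : ∀ g ∈ G, IsReflection n g → g ∈ H) (q : polyS n) (hq : Prime q) :
    ∃ v : Fin n → ℂ, eval v q = 0 ∧
      ∀ g ∈ G, (g : Matrix (Fin n) (Fin n) ℂ).mulVec v = v → g ∈ H := by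
  classical
  have hne : Nonempty (Fin n) := ⟨⟨0, hn⟩⟩
  by_contra hcon
  push Not at hcon
  let l : GL (Fin n) ℂ → Fin n → polyS n := fun g i =>
    ∑ k, C (((g : Matrix (Fin n) (Fin n) ℂ) - 1) i k) * X k
  have hl1 : ∀ g i, (l g i).IsHomogeneous 1 := fun g i =>
    IsHomogeneous.sum _ _ _ fun k _ => isHomogeneous_C_mul_X _ _
  have hl2 : ∀ g i v, eval v (l g i) = (g : Matrix (Fin n) (Fin n) ℂ).mulVec v i - v i := by
    intro g i v
    have : (g : Matrix (Fin n) (Fin n) ℂ).mulVec v i - v i =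
      (((g : Matrix (Fin n) (Fin n) ℂ) - 1).mulVec v) i := by
      rw [Matrix.sub_mulVec, Matrix.one_mulVec, Pi.sub_apply]
    rw [this]
    simp [l, Matrix.mulVec, dotProduct]
  have hq0 : 1 ≤ q.totalDegree := by
    rw [Nat.one_le_iff_ne_zero]
    intro h0
    rw [totalDegree_eq_zero_iff_eq_C] at h0
    have h1 : coeff 0 q ≠ 0 := fun h => hq.ne_zero (by rw [h0, h, C_0])
    apply hq.not_isUnit
    rw [h0]
    exact (IsUnit.mk0 _ h1).map C
  have hch : ∀ g : G, (g : GL (Fin n) ℂ) ∉ H → ∃ i, ¬ q ∣ l g i := by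
    intro g hg
    by_contra hno
    push Not at hno
    have h1 : ∀ i, ∃ c : ℂ, l g i = q * C c := by
      intro i
      obtain ⟨r, hr⟩ := hno i
      by_cases hl0 : l g i = 0
      · exact ⟨0, by rw [hl0]; simp⟩
      have hr0 : r ≠ 0 := by rintro rfl; exact hl0 (by rw [hr, mul_zero])
      have h2 := (hl1 g i).totalDegree hl0
      rw [hr, totalDegree_mul_of_isDomain hq.ne_zero hr0] at h2
      have h3 : r.totalDegree = 0 := by omega
      rw [totalDegree_eq_zero_iff_eq_C] at h3
      exact ⟨coeff 0 r, by rw [hr, ← h3]⟩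
    choose c hc using h1
    have hmat : ((g : GL (Fin n) ℂ) : Matrix (Fin n) (Fin n) ℂ) - 1 =
        Matrix.vecMulVec c (fun k => coeff (Finsupp.single k 1) q) := by
      ext i k
      have := congrArg (coeff (Finsupp.single k 1)) (hc i)
      rw [mul_comm, coeff_C_mul] at this
      rw [Matrix.vecMulVec_apply, ← this]
      simp only [l, coeff_sum, coeff_C_mul, coeff_X, Finsupp.single_left_inj one_ne_zero]
      simp
    apply hg
    apply hH g g.2
    have hg1 : (g : GL (Fin n) ℂ) ≠ 1 := fun h => hg (h ▸ one_mem H)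
    refine ⟨hg1, ?_⟩
    set L := Matrix.toLin' (((g : GL (Fin n) ℂ) : Matrix (Fin n) (Fin n) ℂ)) - LinearMap.id with hL
    have hL' : L = Matrix.toLin' (((g : GL (Fin n) ℂ) : Matrix (Fin n) (Fin n) ℂ) - 1) := by
      rw [map_sub, Matrix.toLin'_one]
    have h1 := LinearMap.finrank_range_add_finrank_ker L
    simp only [Module.finrank_fintype_fun_eq_card, Fintype.card_fin] at h1
    have h2 : Module.finrank ℂ (LinearMap.range L) ≤ 1 := by
      have := Matrix.rank_vecMulVec_le c (fun k => coeff (Finsupp.single k 1) q)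
      rw [← hmat] at this
      rw [hL']
      exact this
    have h3 : Module.finrank ℂ (LinearMap.range L) ≠ 0 := by
      intro h0
      rw [Submodule.finrank_eq_zero, LinearMap.range_eq_bot, hL',
        LinearEquiv.map_eq_zero_iff, sub_eq_zero] at h0
      exact hg1 (Units.ext h0)
    omega
  choose! i hi using hch
  set p : polyS n := ∏ g : G, if (g : GL (Fin n) ℂ) ∈ H then 1 else l g (i g) with hp
  have hpv : p ∈ vanishingIdeal ℂ (zeroLocus ℂ (Ideal.span {q})) := by
    rw [mem_vanishingIdeal_iff]
    intro v hv
    rw [mem_zeroLocus_iff] at hv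
    have h1 := hv q (Ideal.subset_span rfl)
    have hev : ∀ p : polyS n, aeval v p = eval v p := fun p => by rw [← coe_aeval_eq_eval]; rfl
    rw [hev] at h1 ⊢
    obtain ⟨g, hg, hgv, hgH⟩ := hcon v h1
    rw [hp, map_prod]
    apply Finset.prod_eq_zero (Finset.mem_univ (⟨g, hg⟩ : G))
    rw [if_neg hgH, hl2, hgv, sub_self]
  rw [vanishingIdeal_zeroLocus_eq_radical] at hpv
  obtain ⟨m, hm⟩ := hpv
  rw [Ideal.mem_span_singleton] at hm
  have h1 := hq.dvd_of_dvd_pow hm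
  obtain ⟨g, -, hg⟩ := hq.exists_mem_finset_dvd h1
  split_ifs at hg with h
  · exact hq.not_isUnit (isUnit_of_dvd_one hg)
  · exact hi g h hg

lemma exists_sep (hn : 1 ≤ n) (G H : Subgroup (GL (Fin n) ℂ)) [Fintype G] (hHG : H ≤ G) (v : Fin n → ℂ)
    (hv : ∀ g ∈ G, (g : Matrix (Fin n) (Fin n) ℂ).mulVec v = v → g ∈ H) :
    ∃ a : polyS n, Inv H a ∧ eval v a = 1 ∧
      ∀ g ∈ G, g ∉ H → eval ((g : Matrix (Fin n) (Fin n) ℂ).mulVec v) a = 0 := by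
  classical
  have hne : Nonempty (Fin n) := ⟨⟨0, hn⟩⟩
  have hfin : Finite H := Finite.of_injective _ (Subgroup.inclusion_injective hHG)
  have := Fintype.ofFinite H
  have h1 : ∀ g : G, (g : GL (Fin n) ℂ) ∉ H → ∃ i,
      ((g : GL (Fin n) ℂ) : Matrix (Fin n) (Fin n) ℂ).mulVec v i ≠ v i := by
    intro g hg
    by_contra hno
    push Not at hno
    exact hg (hv g g.2 (funext hno))
  choose! i hi using h1
  let t : G → ℂ := fun g => ((g : GL (Fin n) ℂ) : Matrix (Fin n) (Fin n) ℂ).mulVec v (i g)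
  let p : polyS n := ∏ g : G, if (g : GL (Fin n) ℂ) ∈ H then 1 else
    C (v (i g) - t g)⁻¹ * (X (i g) - C (t g))
  have hp1 : eval v p = 1 := by
    simp only [p, map_prod]
    apply Finset.prod_eq_one
    intro g _
    split_ifs with h
    · simp
    · simp only [map_mul, map_sub, eval_C, eval_X]
      exact inv_mul_cancel₀ (sub_ne_zero.mpr (hi g h).symm)
  have hp2 : ∀ g ∈ G, g ∉ H → eval ((g : Matrix (Fin n) (Fin n) ℂ).mulVec v) p = 0 := by
    intro g hg hgH
    simp only [p, map_prod]
    apply Finset.prod_eq_zero (Finset.mem_univ (⟨g, hg⟩ : G))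
    rw [if_neg hgH]
    simp [t]
  clear_value p
  refine ⟨1 - ∏ h : H, (1 - gammaAct n h p), ?_, ?_, ?_⟩
  · intro M hM
    simp only [map_sub, map_prod, map_one, ← gamma_mul]
    refine congrArg (fun z : polyS n => 1 - z) ?_
    exact Fintype.prod_equiv (Equiv.mulLeft (⟨M, hM⟩ : H)) _ _ (fun x => by simp)
  · rw [map_sub, map_prod, Finset.prod_eq_zero (Finset.mem_univ 1)]
    · simp
    · simp [gamma_one, hp1]
  · intro g hg hgH
    rw [map_sub, map_prod, Finset.prod_eq_one, map_one, sub_self]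
    intro h _
    rw [map_sub, eval_gamma, Matrix.mulVec_mulVec, ← Units.val_mul, hp2, map_one, sub_zero]
    · exact mul_mem (inv_mem (hHG h.2)) hg
    · intro h2
      apply hgH
      have := mul_mem h.2 h2
      simpa using this

lemma ker_rank (M : GL (Fin n) ℂ) : Module.finrank ℂ
    (LinearMap.ker (Matrix.toLin' ((M : Matrix (Fin n) (Fin n) ℂ)) - LinearMap.id)) =
      n - ((M : Matrix (Fin n) (Fin n) ℂ) - 1).rank := by
  have hL' : Matrix.toLin' (M : Matrix (Fin n) (Fin n) ℂ) - LinearMap.id =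
      Matrix.toLin' ((M : Matrix (Fin n) (Fin n) ℂ) - 1) := by
    rw [map_sub, Matrix.toLin'_one]
  have h1 := LinearMap.finrank_range_add_finrank_ker
    (Matrix.toLin' (M : Matrix (Fin n) (Fin n) ℂ) - LinearMap.id)
  have h2 : Module.finrank ℂ (LinearMap.range
    (Matrix.toLin' (M : Matrix (Fin n) (Fin n) ℂ) - LinearMap.id)) =
      ((M : Matrix (Fin n) (Fin n) ℂ) - 1).rank := by
    rw [hL']; rfl
  rw [h2] at h1
  simp only [Module.finrank_fintype_fun_eq_card, Fintype.card_fin] at h1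
  omega

lemma refl_conj {M : GL (Fin n) ℂ} (hM : IsReflection n M) (g : GL (Fin n) ℂ) :
    IsReflection n (g⁻¹ * M * g) := by
  refine ⟨?_, ?_⟩
  · intro h
    apply hM.1
    have : M = g * (g⁻¹ * M * g) * g⁻¹ := by group
    rw [this, h]; simp
  · rw [← hM.2, ker_rank, ker_rank]
    congr 1
    have h1 : ((g⁻¹ * M * g : GL (Fin n) ℂ) : Matrix (Fin n) (Fin n) ℂ) - 1 =
        ((g⁻¹ : GL (Fin n) ℂ) : Matrix (Fin n) (Fin n) ℂ) *
          ((M : Matrix (Fin n) (Fin n) ℂ) - 1) * (g : Matrix (Fin n) (Fin n) ℂ) := by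
      rw [mul_sub, sub_mul, mul_one, ← Units.val_mul, ← Units.val_mul, ← Units.val_mul,
        inv_mul_cancel, Units.val_one]
    rw [h1, Matrix.rank_mul_eq_left_of_isUnit_det, Matrix.rank_mul_eq_right_of_isUnit_det]
    · exact (Matrix.isUnit_iff_isUnit_det _).mp (Units.isUnit _)
    · exact (Matrix.isUnit_iff_isUnit_det _).mp (Units.isUnit _)

lemma eval_aeval_pt (ψ : Fin n → polyS n) (v : Fin n → ℂ) (Q : polyS n) :
    eval v (aeval ψ Q) = eval (fun k => eval v (ψ k)) Q := by
  induction Q using MvPolynomial.induction_on with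
  | C a => simp
  | add p q hp hq => rw [map_add, map_add, map_add, hp, hq]
  | mul_X p i hp => rw [map_mul, map_mul, map_mul, hp, aeval_X, eval_X]

lemma etale (hn : 1 ≤ n) (G H : Subgroup (GL (Fin n) ℂ)) [Fintype G] (hHG : H ≤ G)
    (hnorm : ∀ g ∈ G, ∀ f, Inv H f → Inv H (gammaAct n g f))
    (φ ψ P : Fin n → polyS n) (hψ : AlgebraicIndependent ℂ ψ)
    (hH : invAlg H = Algebra.adjoin ℂ (Set.range ψ))
    (hG : invAlg G = Algebra.adjoin ℂ (Set.range φ))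
    (hP : ∀ i, aeval ψ (P i) = φ i) (v : Fin n → ℂ)
    (hv : ∀ g ∈ G, (g : Matrix (Fin n) (Fin n) ℂ).mulVec v = v → g ∈ H) :
    eval v (aeval ψ (Matrix.of fun i k => pderiv k (P i)).det) ≠ 0 := by
  classical
  obtain ⟨a, ha1, ha2, ha3⟩ := exists_sep hn G H hHG v hv
  have hlift : ∀ f, Inv H f → ∃ Q : polyS n, aeval ψ Q = f := by
    intro f hf
    have : f ∈ invAlg H := hf
    rw [hH, Algebra.adjoin_range_eq_range_aeval] at this
    exact this
  have hψinv : ∀ j, Inv H (ψ j) := by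
    intro j
    rw [← mem_invAlg, hH]
    exact Algebra.subset_adjoin ⟨j, rfl⟩
  have hinj : Function.Injective (aeval ψ : polyS n →ₐ[ℂ] polyS n) := hψ
  choose A hA using fun g : G => hlift _ (hnorm g g.2 a ha1)
  choose Y hY using fun (j : Fin n) (g : G) => hlift _ (hnorm g g.2 _ (hψinv j))
  set w : Fin n → ℂ := fun k => eval v (ψ k) with hw
  have hAw : ∀ g : G, eval w (A g) = if (g : GL (Fin n) ℂ) ∈ H then 1 else 0 := by
    intro g
    rw [← eval_aeval_pt, hA]
    split_ifs with h
    · rw [ha1 g h, ha2]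
    · rw [eval_gamma]
      exact ha3 _ (inv_mem g.2) (fun h2 => h (by simpa using inv_mem h2))
  have hYX : ∀ j (g : G), (g : GL (Fin n) ℂ) ∈ H → Y j g = X j := by
    intro j g h
    apply hinj
    rw [hY, hψinv j g h, aeval_X]
  have hF : ∀ j, ∃ F : polyS n, aeval P F =
      ∑ g : G, Y j g * (C 3 * A g ^ 2 - C 2 * A g ^ 3) := by
    intro j
    have h1 : rey G (ψ j * (C 3 * a ^ 2 - C 2 * a ^ 3)) ∈ invAlg G := rey_inv G _
    rw [hG, Algebra.adjoin_range_eq_range_aeval] at h1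
    obtain ⟨F, hF⟩ := h1
    refine ⟨F, hinj ?_⟩
    rw [comp_aeval_apply]
    simp only [hP]
    refine hF.trans ?_
    have hC : ∀ (M : GL (Fin n) ℂ) (c : ℂ), gammaAct n M (C c) = C c := fun M c =>
      (gammaAct n M).commutes c
    simp only [rey, map_sum, map_mul, map_sub, map_pow, hA, hY, hC]
    simp only [← algebraMap_eq, AlgHom.commutes, hA, hY, LinearMap.coe_mk, AddHom.coe_mk, map_mul, map_sub, map_pow]
  choose F hF using hF
  set c : ℂ := ∑ g : G, if (g : GL (Fin n) ℂ) ∈ H then (1 : ℂ) else 0 with hc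
  have hc0 : c ≠ 0 := by
    rw [hc, Finset.sum_boole]
    norm_cast
    exact Finset.card_ne_zero.mpr ⟨1, by simp⟩
  set J : Matrix (Fin n) (Fin n) ℂ := Matrix.of fun i k => eval w (pderiv k (P i)) with hJ
  set B : Matrix (Fin n) (Fin n) ℂ := Matrix.of fun j i => eval w (aeval P (pderiv i (F j))) with hB
  have hBJ : B * J = c • 1 := by
    ext j k
    have h1 := congrArg (fun q => eval w (pderiv k q)) (hF j)
    simp only [chain_rule, map_sum, map_mul] at h1
    rw [Matrix.mul_apply]
    simp only [hB, hJ, Matrix.of_apply]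
    rw [h1, Matrix.smul_apply, hc, Finset.sum_smul]
    refine Finset.sum_congr rfl fun g _ => ?_
    simp only [pderiv_mul, map_sub, pderiv_pow, pderiv_C, map_add, map_mul, map_pow, hAw, eval_C]
    split_ifs with h
    · rw [hYX j g h]
      simp [pderiv_X, Matrix.one_apply, Pi.single_apply]
      norm_num
      right
      ring
    · simp
  have hdet : eval v (aeval ψ (Matrix.of fun i k => pderiv k (P i)).det) = J.det := by
    rw [eval_aeval_pt, RingHom.map_det]
    rfl
  rw [hdet]
  intro h0
  have h2 := congrArg Matrix.det hBJ
  rw [Matrix.det_mul, h0, mul_zero, Matrix.det_smul, Matrix.det_one, mul_one] at h2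
  exact pow_ne_zero _ hc0 h2.symm

lemma descend {φ ψ P : Fin n → polyS n} {d e : Fin n → ℕ} (hd : ∀ i, 1 ≤ d i)
    (hφ : ∀ i, (φ i).IsHomogeneous (d i)) (he : ∀ i, 1 ≤ e i)
    (hψ : ∀ i, (ψ i).IsHomogeneous (e i)) (hP : ∀ i, aeval ψ (P i) = φ i)
    (hdet : eval 0 (aeval ψ (Matrix.of fun i k => pderiv k (P i)).det) ≠ 0) :
    ∀ j, ψ j ∈ Algebra.adjoin ℂ (Set.range φ) := by
  classical
  have hψ0 : (fun k => eval 0 (ψ k)) = (0 : Fin n → ℂ) := by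
    funext k
    have := cc_hom (he k) (hψ k)
    rwa [← eval_zero] at this
  have hφ0 : ∀ k, eval 0 (φ k) = 0 := by
    intro k
    have := cc_hom (hd k) (hφ k)
    rwa [← eval_zero] at this
  rw [eval_aeval_pt, hψ0, RingHom.map_det] at hdet
  set J : Matrix (Fin n) (Fin n) ℂ := (eval 0).mapMatrix (Matrix.of fun i k => pderiv k (P i))
    with hJ
  have hKJ : J⁻¹ * J = 1 := Matrix.nonsing_inv_mul _ (isUnit_iff_ne_zero.mpr hdet)
  set K := J⁻¹
  let Q : Fin n → polyS n := fun j => X j - ∑ i, C (K j i) * P i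
  have hQ0 : ∀ j, coeff 0 (Q j) = 0 := by
    intro j
    have h1 : ∀ i, coeff 0 (P i) = 0 := by
      intro i
      rw [← constantCoeff_eq, ← eval_zero, ← hψ0, ← eval_aeval_pt, hP, hφ0]
    simp [Q, coeff_sum, coeff_C_mul, h1]
  have hQ1 : ∀ j k, coeff (Finsupp.single k 1) (Q j) = 0 := by
    intro j k
    have h1 : coeff 0 (pderiv k (Q j)) = coeff (Finsupp.single k 1) (Q j) := by
      rw [coeff_pderiv]; simp
    rw [← h1, ← constantCoeff_eq, ← eval_zero]
    have h2 := congrFun (congrFun hKJ j) k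
    rw [Matrix.mul_apply] at h2
    simp only [Q, map_sub, map_sum, pderiv_C_mul, map_mul, eval_C, pderiv_X]
    have h3 : ∑ i, K j i * eval 0 (pderiv k (P i)) = (1 : Matrix (Fin n) (Fin n) ℂ) j k := h2
    rw [h3]
    simp [Pi.single_apply, Matrix.one_apply, apply_ite (eval 0), sub_eq_zero]
  have main : ∀ N, ∀ j, e j = N → ψ j ∈ Algebra.adjoin ℂ (Set.range φ) := by
    intro N
    induction N using Nat.strong_induction_on with
    | _ N ih =>
    intro j hj
    have h1 : ψ j = ∑ i, C (K j i) * φ i + aeval ψ (Q j) := by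
      simp only [Q, map_sub, map_sum, map_mul, aeval_X, hP, aeval_C, algebraMap_eq]
      ring
    have h2 := congrArg (homogeneousComponent (e j)) h1
    rw [homogeneousComponent_of_mem (hψ j), if_pos rfl, map_add, map_sum, ← aeval_whc ψ e hψ] at h2
    rw [h2]
    apply add_mem
    · apply sum_mem
      intro i _
      rw [homogeneousComponent_C_mul, homogeneousComponent_of_mem (hφ i)]
      apply mul_mem (Subalgebra.algebraMap_mem _ _)
      split_ifs
      · exact Algebra.subset_adjoin (Set.mem_range_self i)
      · exact zero_mem _
    · rw [aeval_def, eval₂_eq']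
      apply sum_mem
      intro m hm
      apply mul_mem (Subalgebra.algebraMap_mem _ _)
      apply prod_mem
      intro k _
      rw [mem_support_iff, coeff_weightedHomogeneousComponent] at hm
      split_ifs at hm with hw
      · by_cases hk : m k = 0
        · rw [hk, pow_zero]; exact one_mem _
        · apply pow_mem
          refine ih (e k) ?_ k rfl
          have hle : Finsupp.single k 1 ≤ m := by
            rw [Finsupp.single_le_iff]; omega
          obtain ⟨m', rfl⟩ := exists_add_of_le hle
          have hm' : m' ≠ 0 := by
            rintro rfl
            rw [add_zero] at hm
            exact hm (hQ1 j k)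
          obtain ⟨i, hi⟩ := Finsupp.ne_iff.mp hm'
          have h3 := Finsupp.le_weight e (s := i) (by have := he i; omega) m'
          rw [map_add, Finsupp.weight_single] at hw
          simp at hw hi
          omega
      · exact absurd rfl hm
  exact fun j => main _ j rfl

theorem backward (hn : 1 ≤ n) {G : Subgroup (GL (Fin n) ℂ)} [Fintype G]
    (φ : Fin n → polyS n) (d : Fin n → ℕ)
    (hd : ∀ i, 1 ≤ d i) (hφ : ∀ i, (φ i).IsHomogeneous (d i))
    (hG : invAlg G = Algebra.adjoin ℂ (Set.range φ)) :
    Subgroup.closure {M : GL (Fin n) ℂ | M ∈ G ∧ IsReflection n M} = G := by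
  classical
  obtain ⟨H, hHdef⟩ : ∃ H, H = Subgroup.closure {M : GL (Fin n) ℂ | M ∈ G ∧ IsReflection n M} :=
    ⟨_, rfl⟩
  rw [← hHdef]
  have hHG : H ≤ G := by
    rw [hHdef, Subgroup.closure_le]; exact fun M hM => hM.1
  have hR : ∀ g ∈ G, IsReflection n g → g ∈ H := fun g hg hr => by
    rw [hHdef]; exact Subgroup.subset_closure ⟨hg, hr⟩
  have hfin : Finite H := Finite.of_injective _ (Subgroup.inclusion_injective hHG)
  have := Fintype.ofFinite H
  have hHR : Subgroup.closure {M : GL (Fin n) ℂ | M ∈ H ∧ IsReflection n M} = H := by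
    apply le_antisymm
    · rw [Subgroup.closure_le]; exact fun M hM => hM.1
    · conv_lhs => rw [hHdef]
      apply Subgroup.closure_mono
      exact fun M hM => ⟨hR M hM.1 hM.2, hM.2⟩
  have hnorm : ∀ g ∈ G, ∀ f, Inv H f → Inv H (gammaAct n g f) := by
    intro g hg f hf
    apply Inv.closure hHdef.symm
    rintro M ⟨hM1, hM2⟩
    have h1 : M * g = g * (g⁻¹ * M * g) := by group
    rw [← gamma_mul, h1, gamma_mul, hf]
    exact hR _ (mul_mem (mul_mem (inv_mem hg) hM1) hg) (refl_conj hM2 g)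
  obtain ⟨ψ, e, he, hψ, hψi, hH⟩ := chevalley hn hHR
  have hP : ∀ i, ∃ P : polyS n, aeval ψ P = φ i := by
    intro i
    have h1 : φ i ∈ invAlg G := by rw [hG]; exact Algebra.subset_adjoin ⟨i, rfl⟩
    have h2 : φ i ∈ invAlg H := fun M hM => h1 M (hHG hM)
    rw [hH, Algebra.adjoin_range_eq_range_aeval] at h2
    exact h2
  choose P hP using hP
  have het := etale hn G H hHG hnorm φ ψ P hψi hH hG hP
  have hX : Prime (X ⟨0, hn⟩ : polyS n) := MvPolynomial.X_prime
  have hdet : eval 0 (aeval ψ (Matrix.of fun i k => pderiv k (P i)).det) ≠ 0 := by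
    intro h0
    set D := aeval ψ (Matrix.of fun i k => pderiv k (P i)).det
    have hq : ∃ q, Prime q ∧ q ∣ D := by
      by_cases hD : D = 0
      · exact ⟨_, hX, hD ▸ dvd_zero _⟩
      · have hu : ¬ IsUnit D := fun h => by
          have := h.map (eval (0 : Fin n → ℂ))
          rw [h0] at this
          exact not_isUnit_zero this
        obtain ⟨q, hq1, hq2⟩ := WfDvdMonoid.exists_irreducible_factor hu hD
        exact ⟨q, hq1.prime, hq2⟩
    obtain ⟨q, hq, r, hr⟩ := hq
    obtain ⟨v, hv1, hv2⟩ := exists_pt hn G H hR q hq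
    apply het v hv2
    change eval v D = 0
    rw [hr, map_mul, hv1, zero_mul]
  have hdesc := descend hd hφ he hψ hP hdet
  apply le_antisymm hHG
  intro g hg
  by_contra hgH
  obtain ⟨v, -, hv2⟩ := exists_pt hn G H hR _ hX
  obtain ⟨a, ha1, ha2, ha3⟩ := exists_sep hn G H hHG v hv2
  have h1 : a ∈ invAlg G := by
    have h2 : a ∈ invAlg H := ha1
    rw [hH] at h2
    rw [hG]
    refine (Algebra.adjoin_le ?_) h2
    rintro _ ⟨j, rfl⟩
    exact hdesc j
  have h3 := h1 g⁻¹ (inv_mem hg)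
  have h4 := congrArg (eval v) h3
  rw [eval_gamma, inv_inv, ha3 g hg hgH, ha2] at h4
  exact zero_ne_one h4


end CST

theorem stmt13 (n : ℕ) (hn : 1 ≤ n) (G : Subgroup (GL (Fin n) ℂ)) (hGfin : Finite G) :
    (Subgroup.closure {M : GL (Fin n) ℂ | M ∈ G ∧ IsReflection n M} = G) ↔
    (∃ (φ : Fin n → polyS n) (d : Fin n → ℕ),
      (∀ i, 1 ≤ d i) ∧ (∀ i, (φ i).IsHomogeneous (d i)) ∧
      AlgebraicIndependent ℂ φ ∧
      {f : polyS n | ∀ M ∈ G, gammaAct n M f = f} =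
        (Algebra.adjoin ℂ (Set.range φ) : Subalgebra ℂ (polyS n))) := by
  have := Fintype.ofFinite G
  constructor
  · intro h
    obtain ⟨φ, d, h1, h2, h3, h4⟩ := CST.chevalley hn h
    exact ⟨φ, d, h1, h2, h3, by rw [← h4]; rfl⟩
  · rintro ⟨φ, d, h1, h2, -, h4⟩
    exact CST.backward hn φ d h1 h2 (SetLike.coe_injective h4)
end

section
/- Let S = ℂ[x_1,x_2], let L = ℂ(x_1,x_2) be its fraction field, let φ_1 = x_1² + x_2², φ_2 = x_1²x_2², and let J = [[2x_1, 2x_2],[2x_1x_2², 2x_1²x_2]] be the Jacobian matrix of (φ_1,φ_2), viewed over L. Define D_1 : S → L by D_1(p) = (x_1·∂p/∂x_1 − x_2·∂p/∂x_2)/(2(x_1² − x_2²)), applied entrywise to J. Then det(J) ≠ 0, and (D_1 J)·J^{-1} = (2(φ_1² − 4φ_2))^{-1}·[[φ_1, −2],[−2φ_2, φ_1]] as 2×2 matrices over L. -/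
open MvPolynomial

noncomputable abbrev polyS2 := MvPolynomial (Fin 2) ℂ
noncomputable abbrev fracL2 := FractionRing polyS2
noncomputable abbrev toL2 : polyS2 →+* fracL2 := algebraMap polyS2 fracL2

/-- The image of the variable `x₁` in `L`. -/
noncomputable def x₁ : fracL2 := toL2 (MvPolynomial.X 0)
/-- The image of the variable `x₂` in `L`. -/
noncomputable def x₂ : fracL2 := toL2 (MvPolynomial.X 1)

/-- `D₁(p) = (x₁·∂p/∂x₁ − x₂·∂p/∂x₂) / (2(x₁² − x₂²))`. -/
noncomputable def D₁ (p : polyS2) : fracL2 :=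
  (x₁ * toL2 (MvPolynomial.pderiv 0 p) - x₂ * toL2 (MvPolynomial.pderiv 1 p)) /
    (2 * (x₁ ^ 2 - x₂ ^ 2))

/-- The Jacobian matrix of `(φ₁, φ₂) = (x₁² + x₂², x₁²x₂²)` over `S`. -/
noncomputable def Jdih : Matrix (Fin 2) (Fin 2) polyS2 :=
  !![2 * MvPolynomial.X 0, 2 * MvPolynomial.X 1;
     2 * MvPolynomial.X 0 * MvPolynomial.X 1 ^ 2, 2 * MvPolynomial.X 0 ^ 2 * MvPolynomial.X 1]

theorem aux_pq {K : Type*} [Field K] (a b : K) (h2 : (2:K) ≠ 0) (ha : a ≠ 0) (hb : b ≠ 0)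
    (hd : a ^ 2 - b ^ 2 ≠ 0) (A : Matrix (Fin 2) (Fin 2) K)
    (hA : A = !![a / (a^2-b^2), -b / (a^2-b^2); -(a*b^2) / (a^2-b^2), a^2*b / (a^2-b^2)])
    (J : Matrix (Fin 2) (Fin 2) K)
    (hJ : J = !![2 * a, 2 * b; 2 * a * b ^ 2, 2 * a ^ 2 * b]) :
    J.det ≠ 0 ∧ A * J⁻¹ = (2 * ((a^2+b^2) ^ 2 - 4 * (a^2*b^2)))⁻¹ •
        !![a^2+b^2, -2; -2 * (a^2*b^2), a^2+b^2] := by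
  have hdet : J.det ≠ 0 := by
    have : J.det = 2 * 2 * a * b * (a^2-b^2) := by
      rw [hJ, Matrix.det_fin_two_of]; ring
    rw [this]
    exact mul_ne_zero (mul_ne_zero (mul_ne_zero (mul_ne_zero h2 h2) ha) hb) hd
  refine ⟨hdet, ?_⟩
  have hu : IsUnit J.det := isUnit_iff_ne_zero.mpr hdet
  have key : A = ((2 * ((a^2+b^2) ^ 2 - 4 * (a^2*b^2)))⁻¹ •
        !![a^2+b^2, -2; -2 * (a^2*b^2), a^2+b^2]) * J := by
    have e : 2 * ((a^2+b^2) ^ 2 - 4 * (a^2*b^2)) = 2 * (a^2-b^2)^2 := by ring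
    rw [e, hA, hJ]
    ext i j
    fin_cases i <;> fin_cases j <;>
      simp [Matrix.mul_apply, Fin.sum_univ_two] <;> field_simp <;> ring
  rw [key, Matrix.mul_assoc, Matrix.mul_nonsing_inv _ hu, Matrix.mul_one]

theorem stmt18 (φ₁ φ₂ : polyS2)
    (hφ₁ : φ₁ = MvPolynomial.X 0 ^ 2 + MvPolynomial.X 1 ^ 2)
    (hφ₂ : φ₂ = MvPolynomial.X 0 ^ 2 * MvPolynomial.X 1 ^ 2) :
    (Jdih.map toL2).det ≠ 0 ∧
    (Matrix.of fun i j => D₁ (Jdih i j)) * (Jdih.map toL2)⁻¹ =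
      (2 * (toL2 φ₁ ^ 2 - 4 * toL2 φ₂))⁻¹ •
        !![toL2 φ₁, -2; -2 * toL2 φ₂, toL2 φ₁] := by
  have inj : Function.Injective toL2 := IsFractionRing.injective polyS2 fracL2
  have h2 : (2 : fracL2) ≠ 0 := two_ne_zero
  have ha : x₁ ≠ 0 := (map_ne_zero_iff toL2 inj).mpr (MvPolynomial.X_ne_zero 0)
  have hb : x₂ ≠ 0 := (map_ne_zero_iff toL2 inj).mpr (MvPolynomial.X_ne_zero 1)
  have hd : x₁ ^ 2 - x₂ ^ 2 ≠ 0 := by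
    have : x₁ ^ 2 - x₂ ^ 2 = toL2 (MvPolynomial.X 0 ^ 2 - MvPolynomial.X 1 ^ 2) := by
      simp [x₁, x₂]
    rw [this]
    refine (map_ne_zero_iff toL2 inj).mpr fun h => ?_
    have := congrArg (MvPolynomial.eval (fun i : Fin 2 => if i = 0 then (1:ℂ) else 0)) h
    simp at this
  have e1 : toL2 φ₁ = x₁ ^ 2 + x₂ ^ 2 := by rw [hφ₁]; simp [x₁, x₂]
  have e2 : toL2 φ₂ = x₁ ^ 2 * x₂ ^ 2 := by rw [hφ₂]; simp [x₁, x₂]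
  have p2 (i : Fin 2) : MvPolynomial.pderiv i (2 : polyS2) = 0 :=
    (MvPolynomial.pderiv i).map_natCast 2
  have c2 : toL2 2 = 2 := map_ofNat _ 2
  have f0 : toL2 (MvPolynomial.X 0) = x₁ := rfl
  have f1 : toL2 (MvPolynomial.X 1) = x₂ := rfl
  rw [e1, e2]
  refine aux_pq x₁ x₂ h2 ha hb hd _ ?_ _ ?_
  · ext i j
    fin_cases i <;> fin_cases j <;>
      simp [D₁, Jdih, MvPolynomial.pderiv_mul, MvPolynomial.pderiv_pow, p2,
        MvPolynomial.pderiv_X, Pi.single_apply, f0, f1, c2] <;> field_simp <;> ring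
  · ext i j
    fin_cases i <;> fin_cases j <;> simp [Jdih, f0, f1, c2]
end

section
/- Let S = ℂ[x_1,x_2], let L = ℂ(x_1,x_2) be its fraction field, let φ_1 = x_1² + x_2², φ_2 = x_1²x_2², and let J = [[2x_1, 2x_2],[2x_1x_2², 2x_1²x_2]] be the Jacobian matrix of (φ_1,φ_2), viewed over L. Define D_2 : S → L by D_2(p) = (∂p/∂x_2)/(2x_2(x_1² − x_2²)) − (∂p/∂x_1)/(2x_1(x_1² − x_2²)), applied entrywise to J. Then det(J) ≠ 0, and (D_2 J)·J^{-1} = (2(φ_1² − 4φ_2))^{-1}·[[−2, φ_1·φ_2^{-1}],[φ_1, φ_1²·φ_2^{-1} − 6]] as 2×2 matrices over L. -/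
open MvPolynomial

/-- `D₂(p) = (∂p/∂x₂)/(2x₂(x₁² − x₂²)) − (∂p/∂x₁)/(2x₁(x₁² − x₂²))`. -/
noncomputable def D₂ (p : polyS2) : fracL2 :=
  toL2 (MvPolynomial.pderiv 1 p) / (2 * x₂ * (x₁ ^ 2 - x₂ ^ 2)) -
    toL2 (MvPolynomial.pderiv 0 p) / (2 * x₁ * (x₁ ^ 2 - x₂ ^ 2))

theorem aux_field {K : Type*} [Field K] (a b : K) (h2 : (2 : K) ≠ 0) (ha : a ≠ 0) (hb : b ≠ 0)
    (hd : a ^ 2 - b ^ 2 ≠ 0) :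
    !![0 / (2 * b * (a ^ 2 - b ^ 2)) - 2 / (2 * a * (a ^ 2 - b ^ 2)),
       2 / (2 * b * (a ^ 2 - b ^ 2)) - 0 / (2 * a * (a ^ 2 - b ^ 2));
       (4 * a * b) / (2 * b * (a ^ 2 - b ^ 2)) - (2 * b ^ 2) / (2 * a * (a ^ 2 - b ^ 2)),
       (2 * a ^ 2) / (2 * b * (a ^ 2 - b ^ 2)) - (4 * a * b) / (2 * a * (a ^ 2 - b ^ 2))] =
    ((2 * ((a ^ 2 + b ^ 2) ^ 2 - 4 * (a ^ 2 * b ^ 2)))⁻¹ •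
      !![-2, (a ^ 2 + b ^ 2) * (a ^ 2 * b ^ 2)⁻¹;
         a ^ 2 + b ^ 2, (a ^ 2 + b ^ 2) ^ 2 * (a ^ 2 * b ^ 2)⁻¹ - 6]) *
      !![2 * a, 2 * b; 2 * a * b ^ 2, 2 * a ^ 2 * b] := by
  have e : (a ^ 2 + b ^ 2) ^ 2 - 4 * (a ^ 2 * b ^ 2) = (a ^ 2 - b ^ 2) ^ 2 := by ring
  rw [e]
  generalize hD : a ^ 2 - b ^ 2 = d at *
  ext i j
  fin_cases i <;> fin_cases j <;>
    simp [Matrix.mul_apply, Fin.sum_univ_two] <;> field_simp <;> rw [← hD] <;> ring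

theorem aux_pd2 (i : Fin 2) : pderiv i (2 : polyS2) = 0 := by
  have : (2 : polyS2) = C 2 := (map_ofNat C 2).symm
  rw [this, pderiv_C]

theorem stmt19 (φ₁ φ₂ : polyS2)
    (hφ₁ : φ₁ = MvPolynomial.X 0 ^ 2 + MvPolynomial.X 1 ^ 2)
    (hφ₂ : φ₂ = MvPolynomial.X 0 ^ 2 * MvPolynomial.X 1 ^ 2) :
    (Jdih.map toL2).det ≠ 0 ∧
    (Matrix.of fun i j => D₂ (Jdih i j)) * (Jdih.map toL2)⁻¹ =
      (2 * (toL2 φ₁ ^ 2 - 4 * toL2 φ₂))⁻¹ •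
        !![-2, toL2 φ₁ * (toL2 φ₂)⁻¹;
           toL2 φ₁, toL2 φ₁ ^ 2 * (toL2 φ₂)⁻¹ - 6] := by
  have inj : Function.Injective toL2 := IsFractionRing.injective polyS2 fracL2
  have ha : x₁ ≠ 0 := by
    unfold x₁; rw [Ne, map_eq_zero_iff _ inj]; exact X_ne_zero 0
  have hb : x₂ ≠ 0 := by
    unfold x₂; rw [Ne, map_eq_zero_iff _ inj]; exact X_ne_zero 1
  have h2 : (2 : fracL2) ≠ 0 := by
    have : (2 : fracL2) = toL2 (C 2) := by
      rw [map_ofNat C 2]; exact (map_ofNat toL2 2).symm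
    rw [this, Ne, map_eq_zero_iff _ inj, C_eq_zero]; norm_num
  have hd : x₁ ^ 2 - x₂ ^ 2 ≠ 0 := by
    have : x₁ ^ 2 - x₂ ^ 2 = toL2 (X 0 ^ 2 - X 1 ^ 2) := by simp [x₁, x₂]
    rw [this, Ne, map_eq_zero_iff _ inj]
    intro h
    have := congrArg (eval ![(1 : ℂ), 0]) h
    simp at this
  have t2 : toL2 2 = 2 := map_ofNat toL2 2
  have hJ : Jdih.map toL2 = !![2 * x₁, 2 * x₂; 2 * x₁ * x₂ ^ 2, 2 * x₁ ^ 2 * x₂] := by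
    ext i j
    fin_cases i <;> fin_cases j <;> simp [Jdih, x₁, x₂, t2]
  have hdet : (Jdih.map toL2).det ≠ 0 := by
    rw [hJ, Matrix.det_fin_two_of]
    have : 2 * x₁ * (2 * x₁ ^ 2 * x₂) - 2 * x₂ * (2 * x₁ * x₂ ^ 2)
      = 2 * 2 * x₁ * x₂ * (x₁ ^ 2 - x₂ ^ 2) := by ring
    rw [this]
    exact mul_ne_zero (mul_ne_zero (mul_ne_zero (mul_ne_zero h2 h2) ha) hb) hd
  refine ⟨hdet, ?_⟩
  have e1 : toL2 φ₁ = x₁ ^ 2 + x₂ ^ 2 := by simp [hφ₁, x₁, x₂]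
  have e2 : toL2 φ₂ = x₁ ^ 2 * x₂ ^ 2 := by simp [hφ₂, x₁, x₂]
  have key := aux_field x₁ x₂ h2 ha hb hd
  have hX : toL2 (X 0) = x₁ := rfl
  have hY : toL2 (X 1) = x₂ := rfl
  refine (congrArg (· * (Jdih.map toL2)⁻¹) (Eq.trans ?_ key)).trans ?_
  · ext i j
    fin_cases i <;> fin_cases j <;>
      simp [Jdih, D₂, aux_pd2, Derivation.leibniz, Derivation.leibniz_pow, pderiv_X, hX, hY, t2] <;>
      ring
  · beta_reduce
    rw [← hJ, Matrix.mul_assoc, Matrix.mul_nonsing_inv _ (isUnit_iff_ne_zero.mpr hdet),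
      Matrix.mul_one, e1, e2]
end
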